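/- arXiv:2503.21390 — 2 statements merged into one kernel-verified Lean document; each statement's English description precedes it below -/
import Mathlib

section
/- Let F be a formal group law over a commutative ring R and set p_F(z) := F^{0,1}(z,0)^{-1} ∈ R⟦z⟧. Then z^{-1}δ_F(w/z)·p_F(z) = z^{-1}δ_{F_a}(w/z) in R⟦z^{±1},w^{±1}⟧, where z^{-1}δ_{F_a}(w/z) = Σ_{n∈ℤ} w^n z^{-n-1} is the delta distribution of the additive formal group law. Consequently, Res^F_{z=0} z^{-1}δ_F(w/z) dz = 1 and Res^F_{w=0} z^{-1}δ_F(w/z) dw = z^{-1} · z = 1 (the F-residue in w of the bilateral series, taken coefficientwise in z, equals z^{-1}·z; explicitly both F-residues equal 1). -/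
/-!
Coefficient-wise formal calculus for vertex `F`-algebras, following
M. Upmeier, "Vertex F-Algebras and Their Associated Lie Algebra".

Series in one, two or three variables are represented by their coefficient
functions `ℤ → R`, `ℤ → ℤ → R`, …; products are given by coefficient-wise
(finite) sums, expressed via `finsum` (`∑ᶠ`).
-/

open scoped BigOperators

noncomputable section

/-- Generalized binomial coefficient `C(n,k) = n(n-1)⋯(n-k+1)/k!` for `n : ℤ`, `k : ℕ`. -/
def zbinom (n : ℤ) (k : ℕ) : ℤ :=
  if 0 ≤ n then (n.toNat.choose k : ℤ)
  else (-1 : ℤ) ^ k * (((k : ℤ) - n - 1).toNat.choose k : ℤ)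

/-- `C(n,m)` for integer `m`, with `C(n,m) = 0` for `m < 0`. -/
def zbinomZ (n m : ℤ) : ℤ := if m < 0 then 0 else zbinom n m.toNat

/-- `(-1)^n` for `n : ℤ`. -/
def msign (n : ℤ) : ℤ := if Even n then 1 else -1

section Series

variable {R : Type*} [CommRing R] {M : Type*} [AddCommGroup M] [Module R M]

/-- Product of a one-variable series with `R`-coefficients with an `M`-valued one. -/
def mulS (f : ℤ → R) (g : ℤ → M) : ℤ → M := fun n => ∑ᶠ i : ℤ, f i • g (n - i)

/-- The constant series `1` (one variable). -/
def oneS (R : Type*) [CommRing R] : ℤ → R := fun n => if n = 0 then 1 else 0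

/-- Natural powers of a one-variable series. -/
def pow1 (f : ℤ → R) : ℕ → ℤ → R
  | 0 => oneS R
  | k + 1 => mulS f (pow1 f k)

/-- Product of two-variable series. -/
def mulS2 (f : ℤ → ℤ → R) (g : ℤ → ℤ → M) : ℤ → ℤ → M :=
  fun a b => ∑ᶠ p : ℤ × ℤ, f p.1 p.2 • g (a - p.1) (b - p.2)

/-- The constant series `1` (two variables). -/
def oneS2 (R : Type*) [CommRing R] : ℤ → ℤ → R := fun a b => if a = 0 ∧ b = 0 then 1 else 0

/-- Natural powers of a two-variable series. -/
def pow2 (f : ℤ → ℤ → R) : ℕ → ℤ → ℤ → R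
  | 0 => oneS2 R
  | k + 1 => mulS2 f (pow2 f k)

/-- `f ∈ M((z))`: only finitely many negative powers. -/
def IsLaurent (f : ℤ → M) : Prop := ∃ N : ℤ, ∀ n : ℤ, n < N → f n = 0

/-- `f ∈ M((z,w))`: only finitely many nonzero coefficients with some negative index. -/
def IsLaurent2 (f : ℤ → ℤ → M) : Prop :=
  {p : ℤ × ℤ | (p.1 < 0 ∨ p.2 < 0) ∧ f p.1 p.2 ≠ 0}.Finite

/-- Formal derivative of a one-variable series. -/
def fderiv1 (f : ℤ → R) : ℤ → R := fun n => ((n + 1 : ℤ) : R) * f (n + 1)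

/-- The polynomial `z - w` as a two-variable series. -/
def zmw (R : Type*) [CommRing R] : ℤ → ℤ → R :=
  fun i j => if i = 1 ∧ j = 0 then 1 else if i = 0 ∧ j = 1 then -1 else 0

/-- `∂/∂w` of a two-variable series. -/
def d01 (f : ℤ → ℤ → R) : ℤ → ℤ → R := fun i j => ((j + 1 : ℤ) : R) * f i (j + 1)

/-- `∂/∂z` of a two-variable series. -/
def d10 (f : ℤ → ℤ → R) : ℤ → ℤ → R := fun i j => ((i + 1 : ℤ) : R) * f (i + 1) j

/-- Substitution `p(f(z,w))` of a two-variable series (zero constant term) into a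
one-variable power series `p`. -/
def comp2 (p : ℤ → R) (f : ℤ → ℤ → R) : ℤ → ℤ → R :=
  fun a b => ∑ᶠ m : ℕ, p (m : ℤ) * pow2 f m a b

/-- Substitution `p(f(z))` of a one-variable series (zero constant term) into a
one-variable power series `p`. -/
def comp1 (p : ℤ → R) (f : ℤ → R) : ℤ → R :=
  fun a => ∑ᶠ m : ℕ, p (m : ℤ) * pow1 f m a

/-- `(G - z)/z` for `G ≡ z (mod w)`. -/
def hzS (G : ℤ → ℤ → R) : ℤ → ℤ → R := fun i j => G (i + 1) j - oneS2 R i j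

/-- Integer powers `i_{z,w} G^n`, for `G ≡ z (mod w)`, expanded in `R((z))⟦w⟧`:
the Newton expansion `z^n ∑_k C(n,k) ((G-z)/z)^k`. -/
def izwPow (G : ℤ → ℤ → R) (n : ℤ) : ℤ → ℤ → R :=
  fun a b => ∑ᶠ k : ℕ, (zbinom n k : R) * pow2 (hzS G) k (a - n) b

/-- `(G - w)/w` for `G ≡ w (mod z)`. -/
def hwS (G : ℤ → ℤ → R) : ℤ → ℤ → R := fun i j => G i (j + 1) - oneS2 R i j

/-- Integer powers `i_{w,z} G^n`, for `G ≡ w (mod z)`, expanded in `R((w))⟦z⟧`. -/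
def iwzPow (G : ℤ → ℤ → R) (n : ℤ) : ℤ → ℤ → R :=
  fun a b => ∑ᶠ k : ℕ, (zbinom n k : R) * pow2 (hwS G) k a (b - n)

/-- `(G + w)/(-w)` for `G ≡ ι(w) (mod z)`. -/
def hwNegS (G : ℤ → ℤ → R) : ℤ → ℤ → R := fun i j => -G i (j + 1) - oneS2 R i j

/-- Integer powers `i_{w,z} G^n`, for `G ≡ -w(1+⋯) (mod z)` (e.g. `G = F(z, ι w)`),
expanded in `R((w))⟦z⟧`. -/
def iwzPowNeg (G : ℤ → ℤ → R) (n : ℤ) : ℤ → ℤ → R :=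
  fun a b => (msign n : R) * ∑ᶠ k : ℕ, (zbinom n k : R) * pow2 (hwNegS G) k a (b - n)

/-- `(f + z)/(-z)` for a series `f = -z(1 + ⋯)` such as `ι(z)`. -/
def hS (f : ℤ → R) : ℤ → R := fun j => -f (j + 1) - oneS R j

/-- Integer powers `f(z)^n` (`n : ℤ`) for `f = -z(1+⋯)`, e.g. `f = ι(z)`. -/
def iotaPow (f : ℤ → R) (n : ℤ) : ℤ → R :=
  fun a => (msign n : R) * ∑ᶠ k : ℕ, (zbinom n k : R) * pow1 (hS f) k (a - n)

/-- `f - 1` for a power series with constant term `1`. -/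
def hOneS (f : ℤ → R) : ℤ → R := fun j => f j - oneS R j

/-- Multiplicative inverse of a power series with constant term `1`. -/
def invOne (f : ℤ → R) : ℤ → R :=
  fun a => ∑ᶠ k : ℕ, ((-1 : R) ^ k) * pow1 (hOneS f) k a

end Series

/-- A (one-dimensional, commutative) formal group law `F(z,w)` over `R`, together with
its (unique) inverse `ι`. -/
structure FormalGroupLaw (R : Type*) [CommRing R] where
  F : ℤ → ℤ → R
  F_supp : ∀ i j : ℤ, i < 0 ∨ j < 0 → F i j = 0
  /-- `F(z,0) = z`, so that `F(z,w) = z + w + O(zw)` using commutativity. -/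
  F_modw : ∀ i : ℤ, F i 0 = if i = 1 then 1 else 0
  F_comm : ∀ i j : ℤ, F i j = F j i
  /-- associativity `F(F(z,w),v) = F(z,F(w,v))`, coefficient-wise. -/
  F_assoc : ∀ a b c : ℤ,
    (∑ᶠ m : ℕ, F (m : ℤ) c * pow2 F m a b) = ∑ᶠ n : ℕ, F a (n : ℤ) * pow2 F n b c
  /-- the inverse `ι(z) = -z + O(z²)`. -/
  inv : ℤ → R
  inv_supp : ∀ n : ℤ, n < 1 → inv n = 0
  inv_one : inv 1 = -1
  /-- `F(z, ι(z)) = 0`, coefficient-wise. -/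
  inv_eq : ∀ n : ℤ, (∑ᶠ p : ℤ × ℕ, F p.1 (p.2 : ℤ) * pow1 inv p.2 (n - p.1)) = 0

namespace FormalGroupLaw

variable {R : Type*} [CommRing R] {M : Type*} [AddCommGroup M] [Module R M]

/-- The series `F(z, ι(w))`. -/
def Fzi (𝓕 : FormalGroupLaw R) : ℤ → ℤ → R :=
  fun i j => ∑ᶠ m : ℕ, 𝓕.F i (m : ℤ) * pow1 𝓕.inv m j

/-- The `F`-delta distribution `z⁻¹δ_F(w/z) = i_{z,w}F(z,ιw)⁻¹ - i_{w,z}F(z,ιw)⁻¹`. -/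
def delta (𝓕 : FormalGroupLaw R) : ℤ → ℤ → R :=
  fun a b => izwPow 𝓕.Fzi (-1) a b - iwzPowNeg 𝓕.Fzi (-1) a b

/-- `p_F(z) = F^{0,1}(z,0)⁻¹`, the coefficient series of the invariant 1-form. -/
def pF (𝓕 : FormalGroupLaw R) : ℤ → R := invOne (fun i => 𝓕.F i 1)

/-- `F`-residue: the coefficient of `z⁻¹` in `f(z)·p_F(z)`. -/
def resF (𝓕 : FormalGroupLaw R) (f : ℤ → M) : M := ∑ᶠ i : ℤ, 𝓕.pF i • f (-1 - i)

/-- The `F`-hyperderivative `𝒮^F_n f`, defined by `i_{z,w}f(F(z,w)) = ∑_n (𝒮^F_n f)(z) wⁿ`. -/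
def hyper (𝓕 : FormalGroupLaw R) (n : ℕ) (f : ℤ → R) : ℤ → R :=
  fun a => ∑ᶠ m : ℤ, f m * izwPow 𝓕.F m a (n : ℤ)

/-- `F`-binomial coefficients: `i_{z,w}F(z,w)^n = ∑_{i,j} binomF(n;i,j) z^i w^j`. -/
def binomF (𝓕 : FormalGroupLaw R) (n i j : ℤ) : R := izwPow 𝓕.F n i j

/-- `φ` is a logarithm of `F`: `φ(F(z,w)) = φ(z) + φ(w)`, `φ(0) = 0`, `φ'(0) = 1`. -/
def IsLogarithm (𝓕 : FormalGroupLaw R) (φ : ℤ → R) : Prop :=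
  (∀ n : ℤ, n < 0 → φ n = 0) ∧ φ 0 = 0 ∧ φ 1 = 1 ∧
  ∀ a b : ℤ, (∑ᶠ m : ℕ, φ (m : ℤ) * pow2 𝓕.F m a b)
    = (if b = 0 then φ a else 0) + (if a = 0 then φ b else 0)

end FormalGroupLaw

section Vertex

variable {R : Type*} [CommRing R] {V : Type*} [AddCommGroup V] [Module R V]

/-- For `c = ∑_m c_m v^m ∈ V((v))`, the substitution `v ↦ F(z,w)` (coefficient `(k,n)` of
`z^k w^n`, expanded in `V((z))⟦w⟧`). -/
def substF (𝓕 : FormalGroupLaw R) (c : ℤ → V) : ℤ → ℤ → V :=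
  fun k n => ∑ᶠ m : ℤ, izwPow 𝓕.F m k n • c m

/-- Coefficients of `i_{z,w} Y(a, F(z,w)) (Y(b,w)c)`, where `Ya v = Y(a,·)v` and
`d = Y(b,·)c`. -/
def substFProd (𝓕 : FormalGroupLaw R) (Ya : V → ℤ → V) (d : ℤ → V) : ℤ → ℤ → V :=
  fun k n => ∑ᶠ q : ℤ × ℤ, izwPow 𝓕.F q.1 k (n - q.2) • Ya (d q.2) q.1

end Vertex

/-- A vertex `F`-algebra `(V, 𝟙, 𝒮, Y)` over the formal group law `𝓕`.
`Y a b : ℤ → V` records the coefficients of `Y(a,z)b = ∑_k (Y a b k) z^k`, and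
`S n` is the component `𝒮⁽ⁿ⁾` of the `F`-shift operator `𝒮(z) = ∑_{n≥0} 𝒮⁽ⁿ⁾ zⁿ`. -/
structure VertexFAlgebra (R : Type*) [CommRing R] (𝓕 : FormalGroupLaw R)
    (V : Type*) [AddCommGroup V] [Module R V] where
  vac : V
  S : ℕ → V →ₗ[R] V
  Y : V →ₗ[R] V →ₗ[R] (ℤ → V)
  /-- `Y(a,z)b ∈ V((z))`. -/
  Y_laurent : ∀ a b : V, IsLaurent (Y a b)
  /-- `Y(a,z)𝟙` is holomorphic. -/
  vac_holo : ∀ (a : V) (k : ℤ), k < 0 → Y a vac k = 0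
  /-- `Y(a,z)𝟙|_{z=0} = a`. -/
  creation : ∀ a : V, Y a vac 0 = a
  /-- `Y(𝟙,z) = id`. -/
  Y_vac : ∀ (b : V) (k : ℤ), Y vac b k = if k = 0 then b else 0
  /-- `𝒮(0) = id`. -/
  S_zero : S 0 = LinearMap.id
  /-- `𝒮(z)𝟙 = 𝟙`. -/
  S_vac : ∀ n : ℕ, 1 ≤ n → S n vac = 0
  /-- `𝒮(z) ∘ 𝒮(w) = 𝒮(F(z,w))`, coefficient-wise. -/
  S_comp : ∀ (a : V) (i j : ℕ),
    S i (S j a) = ∑ᶠ m : ℕ, pow2 𝓕.F m (i : ℤ) (j : ℤ) • S m a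
  /-- `F`-translation covariance `Y(𝒮(w)a, z)b = i_{z,w} Y(a,F(z,w))b`. -/
  translation : ∀ (a b : V) (k : ℤ) (n : ℕ),
    Y (S n a) b k = substF 𝓕 (Y a b) k (n : ℤ)
  /-- weak `F`-associativity. -/
  weak_assoc : ∀ a b c : V, ∃ N : ℕ,
    mulS2 (pow2 𝓕.F N) (fun k l => Y (Y a b k) c l)
      = mulS2 (pow2 𝓕.F N) (substFProd 𝓕 (fun v => Y a v) (Y b c))
  /-- skew symmetry `Y(a,z)b = 𝒮(z)(Y(b,ι(z))a)`, coefficient-wise. -/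
  skew : ∀ (a b : V) (k : ℤ),
    Y a b k = ∑ᶠ q : ℕ × ℤ, iotaPow 𝓕.inv q.2 (k - (q.1 : ℤ)) • S q.1 (Y b a q.2)

end

/-!
Write `D = F(z, ι(w))`. Then `F(D, w) = z`, and expanding `F(D, w)` to first order in `D` gives
`D * P = z - w` for a double power series `P` with `P(w, w) = F^{1,0}(0, w) = p_F(w)⁻¹`. So `D⁻¹`
is `P * (z - w)⁻¹` in either region, and the difference of the two expansions is
`P * z⁻¹δ(w/z)`: its coefficient at `zᵃwᵇ` is the sum of all coefficients of `P` in total degree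
`a + b + 1`, that is, the coefficient of `P(w, w)` in this degree.

Both regions are treated at once, by computing with Hahn series over `ℤ × ℤ` in the two
lexicographic orders.
-/

noncomputable section

namespace FormalSeries

open Function
open MvPowerSeries (X coeff constantCoeff rename subst HasSubst)

section Hahn

variable {R Γ Γ' : Type*} [CommRing R]

section PartialOrder

variable [AddCommGroup Γ] [PartialOrder Γ] [IsOrderedCancelAddMonoid Γ]
  [AddCommGroup Γ'] [PartialOrder Γ'] [IsOrderedCancelAddMonoid Γ']

open Classical in
theorem support_coeff_mul_coeff_sub_subset (x y : HahnSeries Γ R) (c : Γ) :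
    support (fun p => x.coeff p * y.coeff (c - p)) ⊆
      ((Finset.antidiagonal x.isPWO_support y.isPWO_support c).image Prod.fst : Finset Γ) := by
  intro p hp
  refine Finset.mem_coe.mpr (Finset.mem_image.mpr ⟨(p, c - p), ?_, rfl⟩)
  exact Finset.mem_antidiagonal.mpr
    ⟨left_ne_zero_of_mul hp, right_ne_zero_of_mul hp, add_sub_cancel _ _⟩

theorem coeff_mul_eq_finsum (x y : HahnSeries Γ R) (c : Γ) :
    (x * y).coeff c = ∑ᶠ p, x.coeff p * y.coeff (c - p) := by
  classical
  rw [finsum_eq_sum_of_support_subset _ (support_coeff_mul_coeff_sub_subset x y c),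
    HahnSeries.coeff_mul, Finset.sum_image]
  · refine Finset.sum_congr rfl fun p hp => ?_
    rw [← (Finset.mem_antidiagonal.mp hp).2.2, add_sub_cancel_left]
  · intro p hp q hq hpq
    have hp := (Finset.mem_antidiagonal.mp hp).2.2
    have hq := (Finset.mem_antidiagonal.mp hq).2.2
    exact Prod.ext hpq (add_left_cancel (hpq ▸ hp.trans hq.symm))

/-- The Hahn series with the same coefficients for a coarser order on the exponents, up to the
relabelling `e`. Expanding a double power series in different regions amounts to different
choices of `e`. -/
def reindex (e : Γ ≃+ Γ') (he : Monotone e) : HahnSeries Γ R →+* HahnSeries Γ' R where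
  toFun x := ⟨fun c => x.coeff (e.symm c),
    (x.isPWO_support.image_of_monotone he).mono fun c hc => ⟨e.symm c, hc, e.apply_symm_apply c⟩⟩
  map_zero' := rfl
  map_add' _ _ := rfl
  map_one' := by
    ext c
    classical
    simp only [HahnSeries.coeff_one]
    exact if_congr e.symm.map_eq_zero_iff rfl rfl
  map_mul' x y := by
    ext c
    simp only [coeff_mul_eq_finsum, map_sub]
    exact (finsum_comp_equiv e.symm.toEquiv).symm

@[simp]
theorem coeff_reindex (e : Γ ≃+ Γ') (he : Monotone e) (x : HahnSeries Γ R) (c : Γ) :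
    (reindex e he x).coeff (e c) = x.coeff c :=
  congrArg x.coeff (e.symm_apply_apply c)

end PartialOrder

theorem orderTop_single_one_pos [Zero Γ] [PartialOrder Γ] {d : Γ} (hd : 0 < d) :
    0 < (HahnSeries.single d (1 : R)).orderTop :=
  (WithTop.coe_pos.mpr hd).trans_le HahnSeries.orderTop_single_le

theorem orderTop_pos [Zero Γ] [LinearOrder Γ] {x : HahnSeries Γ R}
    (hx : ∀ c ≤ 0, x.coeff c = 0) : 0 < x.orderTop := by
  by_contra! h
  obtain ⟨c, hc⟩ := WithTop.ne_top_iff_exists.mp (h.trans_lt (WithTop.coe_lt_top 0)).ne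
  exact HahnSeries.coeff_orderTop_ne hc.symm (hx c (WithTop.coe_le_coe.mp (hc ▸ h)))

section LinearOrder

variable [AddCommGroup Γ] [LinearOrder Γ] [IsOrderedAddMonoid Γ]

theorem coeff_eq_finsum_of_one_add_mul_eq_one {x y : HahnSeries Γ R} (hx : 0 < x.orderTop)
    (h : (1 + x) * y = 1) (c : Γ) : y.coeff c = ∑ᶠ k : ℕ, (-1) ^ k * (x ^ k).coeff c := by
  have hx' : 0 < (-x).orderTop := by rwa [HahnSeries.orderTop_neg]
  have hgeom := HahnSeries.SummableFamily.one_sub_self_mul_hsum_powers hx'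
  rw [sub_neg_eq_add] at hgeom
  rw [left_inv_eq_right_inv ((mul_comm y _).trans h) hgeom, HahnSeries.SummableFamily.coeff_hsum]
  refine finsum_congr fun k => ?_
  rw [HahnSeries.SummableFamily.powers_of_orderTop_pos hx', ← neg_one_smul R x, smul_pow,
    HahnSeries.coeff_smul, smul_eq_mul]

/-- The geometric series `∑ₖ t^{kd}`, the inverse of `1 - t^d` when `0 < d`. -/
def geometric (R : Type*) [CommRing R] (d : Γ) : HahnSeries Γ R :=
  (HahnSeries.SummableFamily.powers (HahnSeries.single d 1)).hsum

theorem one_sub_single_mul_geometric {d : Γ} (hd : 0 < d) :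
    (1 - HahnSeries.single d 1) * geometric R d = 1 :=
  HahnSeries.SummableFamily.one_sub_self_mul_hsum_powers (orderTop_single_one_pos hd)

open Classical in
theorem coeff_geometric {d : Γ} (hd : 0 < d) (c : Γ) :
    (geometric R d).coeff c = if ∃ k : ℕ, k • d = c then 1 else 0 := by
  rw [geometric, HahnSeries.SummableFamily.coeff_hsum]
  simp only [HahnSeries.SummableFamily.powers_of_orderTop_pos (orderTop_single_one_pos hd),
    HahnSeries.single_pow, one_pow, HahnSeries.coeff_single]
  split_ifs with h
  · obtain ⟨k, rfl⟩ := h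
    rw [finsum_eq_single _ k, if_pos rfl]
    exact fun l hl => if_neg fun h => hl (nsmul_left_strictMono hd |>.injective h.symm)
  · exact finsum_eq_zero_of_forall_eq_zero fun k => if_neg fun hk => h ⟨k, hk.symm⟩

theorem coeff_mul_geometric (x : HahnSeries Γ R) {d : Γ} (hd : 0 < d) (c : Γ) :
    (x * geometric R d).coeff c = ∑ᶠ s ∈ {s | ∃ k : ℕ, k • d = c - s}, x.coeff s := by
  classical
  rw [coeff_mul_eq_finsum]
  refine finsum_congr fun s => ?_
  rw [coeff_geometric hd, mul_ite, mul_one, mul_zero, finsum_eq_if]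
  rfl

theorem finsum_pow_one_sub_single_mul_sub_one {q p : HahnSeries Γ R} {d : Γ} (hd : 0 < d)
    (hq : 0 < (q - 1).orderTop) (hqp : q * p = 1) (c : Γ) :
    ∑ᶠ k : ℕ, (-1) ^ k * (((1 - HahnSeries.single d 1) * q - 1) ^ k).coeff c
      = (p * geometric R d).coeff c := by
  refine (coeff_eq_finsum_of_one_add_mul_eq_one ?_ ?_ c).symm
  · have hd' : 0 < ((1 - HahnSeries.single d (1 : R)) - 1).orderTop := by
      simpa using orderTop_single_one_pos hd
    exact (HahnSeries.toOrderTopSubOnePos hd' * HahnSeries.toOrderTopSubOnePos hq).2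
  · linear_combination (1 - HahnSeries.single d 1) * geometric R d * hqp
      + one_sub_single_mul_geometric (R := R) hd

end LinearOrder

end Hahn

section Bilateral

variable {R Γ : Type*} [CommRing R]

theorem mulS_coeff (x y : HahnSeries ℤ R) : mulS x.coeff y.coeff = (x * y).coeff := by
  funext c
  simp only [mulS, smul_eq_mul, coeff_mul_eq_finsum]

theorem oneS_eq_coeff_one : oneS R = (1 : HahnSeries ℤ R).coeff := by
  funext c
  classical
  rw [oneS, HahnSeries.coeff_one]
  congr

theorem pow1_coeff (x : HahnSeries ℤ R) (k : ℕ) : pow1 x.coeff k = (x ^ k).coeff := by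
  induction k with
  | zero => rw [pow1, pow_zero, oneS_eq_coeff_one]
  | succ k ih => rw [pow1, ih, mulS_coeff, pow_succ']

theorem hOneS_coeff (x : HahnSeries ℤ R) : hOneS x.coeff = (x - 1).coeff := by
  funext c
  rw [hOneS, oneS_eq_coeff_one, HahnSeries.coeff_sub]

theorem invOne_coeff {x y : HahnSeries ℤ R} (hx : 0 < (x - 1).orderTop) (h : x * y = 1) :
    invOne x.coeff = y.coeff := by
  funext c
  simp only [invOne, hOneS_coeff, pow1_coeff]
  exact (coeff_eq_finsum_of_one_add_mul_eq_one hx (by rwa [add_sub_cancel]) c).symm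

variable [AddCommGroup Γ]

/-- The bilateral series in `z` and `w` whose coefficient of `zⁱwʲ` is that of `x` at `e (i, j)`. -/
def bilateral [PartialOrder Γ] (e : ℤ × ℤ ≃+ Γ) (x : HahnSeries Γ R) : ℤ → ℤ → R :=
  fun i j => x.coeff (e (i, j))

theorem oneS2_eq_bilateral_one [PartialOrder Γ] (e : ℤ × ℤ ≃+ Γ) :
    oneS2 R = bilateral e 1 := by
  classical
  funext a b
  rw [oneS2, bilateral, HahnSeries.coeff_one]
  exact if_congr (by rw [e.map_eq_zero_iff, Prod.mk_eq_zero]) rfl rfl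

theorem finsum_bilateral [PartialOrder Γ] (e : ℤ × ℤ ≃+ Γ) (x : HahnSeries Γ R) (S : Set Γ) :
    ∑ᶠ c ∈ S, x.coeff c = ∑ᶠ s ∈ e ⁻¹' S, bilateral e x s.1 s.2 := by
  simp only [finsum_mem_def]
  rw [← finsum_comp_equiv e.toEquiv]
  rfl

section PartialOrder

variable [PartialOrder Γ] [IsOrderedCancelAddMonoid Γ] (e : ℤ × ℤ ≃+ Γ)

theorem mulS2_bilateral (x y : HahnSeries Γ R) :
    mulS2 (bilateral e x) (bilateral e y) = bilateral e (x * y) := by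
  funext a b
  rw [bilateral, coeff_mul_eq_finsum, ← finsum_comp_equiv e.toEquiv]
  exact finsum_congr fun p => congrArg (x.coeff (e p) * y.coeff ·) (map_sub e (a, b) p)

theorem pow2_bilateral (x : HahnSeries Γ R) (k : ℕ) :
    pow2 (bilateral e x) k = bilateral e (x ^ k) := by
  induction k with
  | zero => rw [pow2, pow_zero, oneS2_eq_bilateral_one e]
  | succ k ih => rw [pow2, ih, mulS2_bilateral, pow_succ']

theorem bilateral_single_mul (p : ℤ × ℤ) (x : HahnSeries Γ R) (i j : ℤ) :
    bilateral e (HahnSeries.single (e p) 1 * x) i j = bilateral e x (i - p.1) (j - p.2) := by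
  have h : e (i, j) = e (i - p.1, j - p.2) + e p := by
    rw [← map_add]
    exact congrArg e (Prod.ext (sub_add_cancel i p.1).symm (sub_add_cancel j p.2).symm)
  rw [bilateral, h, HahnSeries.coeff_single_mul_add, one_mul, bilateral]

theorem hzS_bilateral (x : HahnSeries Γ R) :
    hzS (bilateral e (HahnSeries.single (e (1, 0)) 1 * x)) = bilateral e (x - 1) := by
  funext i j
  rw [hzS, bilateral_single_mul, oneS2_eq_bilateral_one e]
  simp [bilateral]

theorem hwNegS_bilateral (x : HahnSeries Γ R) :
    hwNegS (bilateral e (-(HahnSeries.single (e (0, 1)) 1 * x))) = bilateral e (x - 1) := by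
  have h := bilateral_single_mul e (0, 1) x
  funext i j
  rw [hwNegS, oneS2_eq_bilateral_one e]
  simp_all [bilateral]

end PartialOrder

theorem zbinom_neg_one (k : ℕ) : zbinom (-1) k = (-1) ^ k := by
  simp [zbinom]

section LinearOrder

variable [LinearOrder Γ] [IsOrderedAddMonoid Γ] {e : ℤ × ℤ ≃+ Γ} {q p : HahnSeries Γ R}

theorem coeff_mul_geometric_apply (x : HahnSeries Γ R) {d : ℤ × ℤ} (hd : 0 < e d) (c : ℤ × ℤ) :
    (x * geometric R (e d)).coeff (e c)
      = ∑ᶠ s ∈ {s | ∃ k : ℕ, k • d = c - s}, bilateral e x s.1 s.2 := by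
  rw [coeff_mul_geometric x hd, finsum_bilateral e]
  refine finsum_mem_congr (Set.ext fun s => ?_) fun _ _ => rfl
  simp only [Set.mem_preimage, Set.mem_ofPred_eq, ← map_sub, ← map_nsmul, e.injective.eq_iff]

theorem izwPow_neg_one_bilateral (he : 0 < e (-1, 1)) (hq : 0 < (q - 1).orderTop)
    (hqp : q * p = 1) (a b : ℤ) :
    izwPow (bilateral e ((HahnSeries.single (e (1, 0)) 1 - HahnSeries.single (e (0, 1)) 1) * q))
        (-1) a b
      = ∑ᶠ s ∈ {s : ℤ × ℤ | s.1 + s.2 = a + b + 1} ∩ {s | s.2 ≤ b}, bilateral e p s.1 s.2 := by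
  have hfactor : (HahnSeries.single (e (1, 0)) 1 - HahnSeries.single (e (0, 1)) 1) * q
      = HahnSeries.single (e (1, 0)) 1 * ((1 - HahnSeries.single (e (-1, 1)) 1) * q) := by
    rw [← mul_assoc, mul_sub, mul_one, HahnSeries.single_mul_single, mul_one, ← map_add]
    rfl
  have hset : {s : ℤ × ℤ | ∃ k : ℕ, k • (-1, 1) = (a - -1, b) - s}
      = {s | s.1 + s.2 = a + b + 1} ∩ {s | s.2 ≤ b} := by
    ext ⟨i, j⟩
    simp only [Set.mem_ofPred_eq, Set.mem_inter_iff, Prod.ext_iff, Prod.smul_mk, Prod.fst_sub,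
      Prod.snd_sub, nsmul_eq_mul]
    exact ⟨fun ⟨k, _, _⟩ => by omega, fun ⟨_, _⟩ => ⟨(b - j).toNat, by omega, by omega⟩⟩
  simp only [izwPow, hfactor, hzS_bilateral, pow2_bilateral, zbinom_neg_one, Int.cast_pow,
    Int.cast_neg, Int.cast_one]
  rw [← hset, ← coeff_mul_geometric_apply p he]
  exact finsum_pow_one_sub_single_mul_sub_one he hq hqp _

theorem iwzPowNeg_neg_one_bilateral (he : 0 < e (1, -1)) (hq : 0 < (q - 1).orderTop)
    (hqp : q * p = 1) (a b : ℤ) :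
    iwzPowNeg (bilateral e ((HahnSeries.single (e (1, 0)) 1 - HahnSeries.single (e (0, 1)) 1) * q))
        (-1) a b
      = -∑ᶠ s ∈ {s : ℤ × ℤ | s.1 + s.2 = a + b + 1} \ {s | s.2 ≤ b}, bilateral e p s.1 s.2 := by
  have hfactor : (HahnSeries.single (e (1, 0)) 1 - HahnSeries.single (e (0, 1)) 1) * q
      = -(HahnSeries.single (e (0, 1)) 1 * ((1 - HahnSeries.single (e (1, -1)) 1) * q)) := by
    rw [← mul_assoc, mul_sub, mul_one, HahnSeries.single_mul_single, mul_one, ← map_add, ← neg_mul,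
      neg_sub]
    rfl
  have hset : {s : ℤ × ℤ | ∃ k : ℕ, k • (1, -1) = (a, b - -1) - s}
      = {s | s.1 + s.2 = a + b + 1} \ {s | s.2 ≤ b} := by
    ext ⟨i, j⟩
    simp only [Set.mem_ofPred_eq, Set.mem_sdiff, Prod.ext_iff, Prod.smul_mk, Prod.fst_sub,
      Prod.snd_sub, nsmul_eq_mul]
    exact ⟨fun ⟨k, _, _⟩ => by omega, fun ⟨_, _⟩ => ⟨(j - b - 1).toNat, by omega, by omega⟩⟩
  have hsign : ((msign (-1) : ℤ) : R) = -1 := by simp [msign]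
  simp only [iwzPowNeg, hfactor, hwNegS_bilateral, pow2_bilateral, zbinom_neg_one, Int.cast_pow,
    Int.cast_neg, Int.cast_one]
  rw [← hset, ← coeff_mul_geometric_apply p he, hsign, neg_one_mul]
  exact congrArg Neg.neg (finsum_pow_one_sub_single_mul_sub_one he hq hqp _)

end LinearOrder

end Bilateral

section Expansion

variable {R Γ : Type*} [CommRing R]

/-- The exponent of a monomial in two variables, as a pair of integers. -/
def exponents : (Fin 2 →₀ ℕ) →+ ℤ × ℤ where
  toFun d := (d 0, d 1)
  map_zero' := rfl
  map_add' _ _ := rfl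

theorem exponents_apply (d : Fin 2 →₀ ℕ) : exponents d = (↑(d 0), ↑(d 1)) :=
  rfl

theorem exponents_le_exponents {d d' : Fin 2 →₀ ℕ} : exponents d ≤ exponents d' ↔ d ≤ d' := by
  rw [Finsupp.le_def, Fin.forall_fin_two]
  exact and_congr Int.ofNat_le Int.ofNat_le

theorem exponents_injective : Injective exponents := fun _ _ h =>
  le_antisymm (exponents_le_exponents.mp h.le) (exponents_le_exponents.mp h.ge)

theorem mem_range_exponents {c : ℤ × ℤ} : c ∈ Set.range exponents ↔ 0 ≤ c := by
  refine ⟨fun ⟨d, hd⟩ => hd ▸ exponents_le_exponents.mpr (zero_le (a := d)), fun ⟨h₀, h₁⟩ => ?_⟩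
  refine ⟨Finsupp.equivFunOnFinite.symm ![c.1.toNat, c.2.toNat], Prod.ext ?_ ?_⟩
  · exact Int.toNat_of_nonneg h₀
  · exact Int.toNat_of_nonneg h₁

/-- A double power series, viewed as a Hahn series with integral exponents. -/
def toHahn : MvPowerSeries (Fin 2) R →+* HahnSeries (ℤ × ℤ) R :=
  (HahnSeries.embDomainRingHom exponents exponents_injective fun _ _ =>
    exponents_le_exponents).comp HahnSeries.toMvPowerSeries.symm.toRingHom

theorem coeff_toHahn_exponents (f : MvPowerSeries (Fin 2) R) (d : Fin 2 →₀ ℕ) :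
    (toHahn f).coeff (exponents d) = coeff d f :=
  HahnSeries.embDomain_coeff

theorem nonneg_of_coeff_toHahn_ne_zero {f : MvPowerSeries (Fin 2) R} {c : ℤ × ℤ}
    (h : (toHahn f).coeff c ≠ 0) : 0 ≤ c := by
  by_contra hc
  exact h (HahnSeries.embDomain_of_notMem_range (mt mem_range_exponents.mp hc))

theorem toHahn_X (i : Fin 2) :
    toHahn (X i : MvPowerSeries (Fin 2) R)
      = HahnSeries.single (exponents (Finsupp.single i 1)) 1 := by
  classical
  ext c
  by_cases hc : 0 ≤ c
  · obtain ⟨d, rfl⟩ := mem_range_exponents.mpr hc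
    simp only [coeff_toHahn_exponents, MvPowerSeries.coeff_X, HahnSeries.coeff_single,
      exponents_injective.eq_iff]
  · rw [not_imp_comm.mp nonneg_of_coeff_toHahn_ne_zero hc, HahnSeries.coeff_single_of_ne]
    rintro rfl
    exact hc (mem_range_exponents.mp ⟨_, rfl⟩)

/-- The bilateral series with the coefficients of a double power series. -/
def toBilateral (f : MvPowerSeries (Fin 2) R) : ℤ → ℤ → R :=
  fun i j => (toHahn f).coeff (i, j)

theorem toBilateral_natCast (f : MvPowerSeries (Fin 2) R) (d : Fin 2 →₀ ℕ) :
    toBilateral f (d 0) (d 1) = coeff d f :=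
  coeff_toHahn_exponents f d

theorem toBilateral_eq_zero (f : MvPowerSeries (Fin 2) R) {i j : ℤ} (h : i < 0 ∨ j < 0) :
    toBilateral f i j = 0 :=
  not_imp_comm.mp nonneg_of_coeff_toHahn_ne_zero fun hc => by
    have h₀ : 0 ≤ i := hc.1
    have h₁ : 0 ≤ j := hc.2
    omega

theorem eq_toBilateral {f : MvPowerSeries (Fin 2) R} {g : ℤ → ℤ → R}
    (hneg : ∀ i j, i < 0 ∨ j < 0 → g i j = 0)
    (hcoeff : ∀ d : Fin 2 →₀ ℕ, g (d 0) (d 1) = coeff d f) : g = toBilateral f := by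
  funext i j
  by_cases h : i < 0 ∨ j < 0
  · rw [hneg i j h, toBilateral_eq_zero f h]
  · obtain ⟨d, hd⟩ := mem_range_exponents.mpr (show (0 : ℤ × ℤ) ≤ (i, j) from by
      exact ⟨show 0 ≤ i by omega, show 0 ≤ j by omega⟩)
    obtain ⟨rfl, rfl⟩ := Prod.mk.inj hd
    exact (hcoeff d).trans (toBilateral_natCast f d).symm

section Reindex

variable [AddCommGroup Γ]

theorem bilateral_reindex_toHahn [PartialOrder Γ] [IsOrderedCancelAddMonoid Γ]
    (e : ℤ × ℤ ≃+ Γ) (he : Monotone e) (f : MvPowerSeries (Fin 2) R) :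
    bilateral e (reindex e he (toHahn f)) = toBilateral f := by
  funext i j
  exact coeff_reindex e he (toHahn f) (i, j)

theorem reindex_single [PartialOrder Γ] [IsOrderedCancelAddMonoid Γ]
    (e : ℤ × ℤ ≃+ Γ) (he : Monotone e) (c : ℤ × ℤ) (r : R) :
    reindex e he (HahnSeries.single c r) = HahnSeries.single (e c) r := by
  classical
  ext c'
  obtain ⟨c', rfl⟩ := e.surjective c'
  simp only [coeff_reindex, HahnSeries.coeff_single, e.injective.eq_iff]
  congr

theorem orderTop_reindex_toHahn_pos [LinearOrder Γ] [IsOrderedAddMonoid Γ]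
    (e : ℤ × ℤ ≃+ Γ) (he : Monotone e) {f : MvPowerSeries (Fin 2) R}
    (hf : constantCoeff f = 0) : 0 < (reindex e he (toHahn f)).orderTop := by
  refine orderTop_pos fun c hc => ?_
  obtain ⟨c, rfl⟩ := e.surjective c
  rw [coeff_reindex]
  by_contra hne
  have hle : e 0 ≤ e c := he (nonneg_of_coeff_toHahn_ne_zero hne)
  have hzero : c = 0 := e.injective (le_antisymm (hc.trans (map_zero e).ge) hle)
  exact hne (hzero ▸ (coeff_toHahn_exponents f 0).trans hf)

variable [LinearOrder Γ] [IsOrderedAddMonoid Γ] {e : ℤ × ℤ ≃+ Γ} {Q P : MvPowerSeries (Fin 2) R}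

theorem reindex_toHahn_X_sub_X_mul (he : Monotone e) (Q : MvPowerSeries (Fin 2) R) :
    reindex e he (toHahn ((X 0 - X 1) * Q))
      = (HahnSeries.single (e (1, 0)) 1 - HahnSeries.single (e (0, 1)) 1)
          * reindex e he (toHahn Q) := by
  have h₀ : exponents (Finsupp.single 0 1) = (1, 0) := by simp [exponents_apply]
  have h₁ : exponents (Finsupp.single 1 1) = (0, 1) := by simp [exponents_apply]
  simp only [map_mul, map_sub, toHahn_X, reindex_single, h₀, h₁]

theorem orderTop_reindex_toHahn_sub_one_pos (he : Monotone e) (hQ : constantCoeff Q = 1) :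
    0 < (reindex e he (toHahn Q) - 1).orderTop := by
  rw [← map_one (reindex e he), ← map_one toHahn, ← map_sub, ← map_sub]
  exact orderTop_reindex_toHahn_pos e he (by rw [map_sub, hQ, map_one, sub_self])

theorem izwPow_neg_one_X_sub_X_mul (hQ : constantCoeff Q = 1) (hQP : Q * P = 1) (a b : ℤ) :
    izwPow (toBilateral ((X 0 - X 1) * Q)) (-1) a b
      = ∑ᶠ s ∈ {s : ℤ × ℤ | s.1 + s.2 = a + b + 1} ∩ {s | s.2 ≤ b}, toBilateral P s.1 s.2 := by
  let e : ℤ × ℤ ≃+ ℤ ×ₗ ℤ := AddEquiv.prodComm.trans (toLexAddEquiv (ℤ × ℤ))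
  have he : Monotone e := Prod.Lex.toLex_mono.comp fun _ _ h => Prod.swap_le_swap.mpr h
  have hpos : 0 < e (-1, 1) := Prod.Lex.toLex_lt_toLex.mpr (Or.inl one_pos)
  rw [← bilateral_reindex_toHahn e he, reindex_toHahn_X_sub_X_mul,
    izwPow_neg_one_bilateral hpos (orderTop_reindex_toHahn_sub_one_pos he hQ)
      (by rw [← map_mul, ← map_mul, hQP, map_one, map_one]), bilateral_reindex_toHahn]

theorem iwzPowNeg_neg_one_X_sub_X_mul (hQ : constantCoeff Q = 1) (hQP : Q * P = 1) (a b : ℤ) :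
    iwzPowNeg (toBilateral ((X 0 - X 1) * Q)) (-1) a b
      = -∑ᶠ s ∈ {s : ℤ × ℤ | s.1 + s.2 = a + b + 1} \ {s | s.2 ≤ b}, toBilateral P s.1 s.2 := by
  let e : ℤ × ℤ ≃+ ℤ ×ₗ ℤ := toLexAddEquiv (ℤ × ℤ)
  have he : Monotone e := Prod.Lex.toLex_mono
  have hpos : 0 < e (1, -1) := Prod.Lex.toLex_lt_toLex.mpr (Or.inl one_pos)
  rw [← bilateral_reindex_toHahn e he, reindex_toHahn_X_sub_X_mul,
    iwzPowNeg_neg_one_bilateral hpos (orderTop_reindex_toHahn_sub_one_pos he hQ)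
      (by rw [← map_mul, ← map_mul, hQP, map_one, map_one]), bilateral_reindex_toHahn]

end Reindex

theorem pow2_toBilateral (f : MvPowerSeries (Fin 2) R) (k : ℕ) :
    pow2 (toBilateral f) k = toBilateral (f ^ k) := by
  have h := pow2_bilateral (AddEquiv.refl (ℤ × ℤ)) (toHahn f) k
  rw [← map_pow] at h
  exact h

/-- Restriction of a double power series to the diagonal: `f(z, z)`. -/
abbrev diagonal (R : Type*) [CommRing R] : MvPowerSeries (Fin 2) R →ₐ[R] PowerSeries R :=
  rename fun _ => ()

theorem finite_antidiagonal_inter_support_toBilateral (f : MvPowerSeries (Fin 2) R) (n : ℤ) :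
    ({s : ℤ × ℤ | s.1 + s.2 = n} ∩ support fun s => toBilateral f s.1 s.2).Finite := by
  refine (Set.finite_Icc (0 : ℤ × ℤ) (n, n)).subset fun s ⟨hsum, hs⟩ => ?_
  have hs' : 0 ≤ s := nonneg_of_coeff_toHahn_ne_zero hs
  have h₀ : 0 ≤ s.1 := hs'.1
  have h₁ : 0 ≤ s.2 := hs'.2
  have hsum : s.1 + s.2 = n := hsum
  exact ⟨hs', ⟨by dsimp; omega, by dsimp; omega⟩⟩

theorem finsum_antidiagonal_toBilateral (f : MvPowerSeries (Fin 2) R) (n : ℤ) :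
    ∑ᶠ s ∈ {s : ℤ × ℤ | s.1 + s.2 = n}, toBilateral f s.1 s.2
      = (diagonal R f : LaurentSeries R).coeff n := by
  rw [PowerSeries.coeff_coe]
  split_ifs with hn
  · refine finsum_mem_eq_zero_of_forall_eq_zero fun s (hs : s.1 + s.2 = n) => ?_
    exact toBilateral_eq_zero f (by omega)
  · have hrange : ∀ s ∈ support fun s : ℤ × ℤ => toBilateral f s.1 s.2,
        s ∈ {s : ℤ × ℤ | s.1 + s.2 = n} ↔ s ∈ exponents ''
          (Finsupp.mapDomain (fun _ => ()) ⁻¹' {Finsupp.single () n.natAbs}) := by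
      intro s hs
      obtain ⟨d, rfl⟩ := mem_range_exponents.mpr (show 0 ≤ s from nonneg_of_coeff_toHahn_ne_zero hs)
      rw [exponents_injective.mem_set_image]
      have hd : Finsupp.mapDomain (fun _ => ()) d = Finsupp.single () (d 0 + d 1) := by
        rw [Finsupp.mapDomain, Finsupp.sum_fintype _ _ fun _ => Finsupp.single_zero _,
          Fin.sum_univ_two, ← Finsupp.single_add]
      rw [Set.mem_preimage, hd, Set.mem_singleton_iff, (Finsupp.single_injective ()).eq_iff,
        Set.mem_ofPred_eq, exponents_apply]
      omega
    rw [finsum_mem_inter_support_eq' _ _ _ hrange,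
      finsum_mem_image exponents_injective.injOn]
    simp only [PowerSeries.coeff, diagonal, MvPowerSeries.coeff_rename]
    rw [← finsum_mem_eq_finite_toFinset_sum]
    exact finsum_mem_congr rfl fun d _ => coeff_toHahn_exponents f d

theorem izwPow_sub_iwzPowNeg_X_sub_X_mul {Q P : MvPowerSeries (Fin 2) R}
    (hQ : constantCoeff Q = 1) (hQP : Q * P = 1) (a b : ℤ) :
    izwPow (toBilateral ((X 0 - X 1) * Q)) (-1) a b
        - iwzPowNeg (toBilateral ((X 0 - X 1) * Q)) (-1) a b
      = (diagonal R P : LaurentSeries R).coeff (a + b + 1) := by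
  rw [izwPow_neg_one_X_sub_X_mul hQ hQP, iwzPowNeg_neg_one_X_sub_X_mul hQ hQP, sub_neg_eq_add,
    finsum_mem_inter_add_sdiff' _ (finite_antidiagonal_inter_support_toBilateral P _),
    finsum_antidiagonal_toBilateral]

end Expansion

section Laurent

variable {R : Type*} [CommRing R]

theorem coeff_coe_mk {g : ℤ → R} (hg : ∀ n < 0, g n = 0) :
    (PowerSeries.mk (fun n => g n) : LaurentSeries R).coeff = g := by
  funext n
  rw [PowerSeries.coeff_coe]
  split_ifs with hn
  · exact (hg n hn).symm
  · rw [PowerSeries.coeff_mk, Int.natAbs_of_nonneg (not_lt.mp hn)]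

theorem orderTop_coe_pos {f : PowerSeries R} (hf : PowerSeries.constantCoeff f = 0) :
    0 < (f : LaurentSeries R).orderTop := by
  refine orderTop_pos fun n hn => ?_
  rw [PowerSeries.coeff_coe]
  split_ifs with hneg
  · rfl
  · rwa [le_antisymm hn (not_lt.mp hneg), Int.natAbs_zero,
      PowerSeries.coeff_zero_eq_constantCoeff_apply]

end Laurent

section Substitution

variable {R σ τ : Type*} [CommRing R]

theorem coeff_X_pow_mul_rename (s : σ ↪ τ) {i : τ}
    (hs : Set.range s = {i}ᶜ) (k : ℕ) (g : MvPowerSeries σ R) (d : τ →₀ ℕ) :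
    coeff d (X i ^ k * rename s g)
      = if k = d i then coeff (d.comapDomain s s.injective.injOn) g else 0 := by
  simp only [MvPowerSeries.X_pow_eq, MvPowerSeries.coeff_monomial_mul, one_mul,
    Finsupp.single_le_iff]
  have hsi (j : σ) : s j ≠ i := by simpa [hs] using Set.mem_range_self (f := s) j
  split_ifs with hle heq heq
  · have hd : d - Finsupp.single i k = Finsupp.embDomain s (d.comapDomain s s.injective.injOn) := by
      ext j
      by_cases hj : j = i
      · subst hj
        rw [Finsupp.embDomain_of_notMem_range _ _ _ (by simp [hs])]
        simp [heq]
      · obtain ⟨j, rfl⟩ : j ∈ Set.range s := by simpa [hs]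
        rw [Finsupp.embDomain_apply_self, Finsupp.tsub_apply, Finsupp.single_eq_of_ne (hsi j)]
        rfl
    rw [hd, MvPowerSeries.coeff_embDomain_rename]
  · refine MvPowerSeries.coeff_rename_eq_zero s g fun ⟨c, hc⟩ => heq ?_
    have h := DFunLike.congr_fun hc i
    rw [Finsupp.mapDomain_of_notMem_range _ _ (by simp [hs]), Finsupp.tsub_apply,
      Finsupp.single_eq_same] at h
    omega
  · exact absurd heq.le hle
  · rfl

theorem coeff_subst_X_rename (s : σ ↪ τ) {i : τ}
    (hs : Set.range s = {i}ᶜ) {g : MvPowerSeries σ R} (hg : constantCoeff g = 0)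
    (f : MvPowerSeries (Fin 2) R) (d : τ →₀ ℕ) :
    coeff d (f.subst ![X i, rename s g])
      = ∑ᶠ m : ℕ, toBilateral f (d i) m * coeff (d.comapDomain s s.injective.injOn) (g ^ m) := by
  have hsubst : HasSubst ![X i, rename s g] :=
    MvPowerSeries.hasSubst_of_constantCoeff_zero fun j => by fin_cases j <;> simp [hg]
  rw [MvPowerSeries.coeff_subst hsubst]
  have hterm (c : Fin 2 →₀ ℕ) : coeff c f • coeff d (c.prod fun j n => ![X i, rename s g] j ^ n)
      = if c 0 = d i then
          toBilateral f (c 0) (c 1) * coeff (d.comapDomain s s.injective.injOn) (g ^ c 1)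
        else 0 := by
    rw [Finsupp.prod_fintype _ _ fun _ => pow_zero _, Fin.prod_univ_two, smul_eq_mul,
      ← mul_ite_zero, toBilateral_natCast, ← coeff_X_pow_mul_rename s hs, map_pow]
    rfl
  have hrange : {c : Fin 2 →₀ ℕ | c 0 = d i}
      = Set.range fun m : ℕ => Finsupp.equivFunOnFinite.symm ![d i, m] := by
    refine Set.ext fun c => ⟨fun hc => ⟨c 1, Finsupp.ext fun j => ?_⟩, fun ⟨m, hm⟩ => hm ▸ rfl⟩
    fin_cases j
    exacts [hc.symm, rfl]
  have hinj : Injective fun m : ℕ => Finsupp.equivFunOnFinite.symm ![d i, m] :=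
    fun m n h => DFunLike.congr_fun h (1 : Fin 2)
  calc
    _ = ∑ᶠ c ∈ {c : Fin 2 →₀ ℕ | c 0 = d i},
          toBilateral f (c 0) (c 1) * coeff (d.comapDomain s s.injective.injOn) (g ^ c 1) :=
      finsum_congr fun c => (hterm c).trans finsum_eq_if.symm
    _ = _ := by
      rw [hrange, finsum_mem_range hinj]
      rfl

theorem coeff_subst_X_subst_X_X (s : Fin 2 ↪ τ) {i : τ}
    (hs : Set.range s = {i}ᶜ) {g : MvPowerSeries (Fin 2) R} (hg : constantCoeff g = 0)
    (f : MvPowerSeries (Fin 2) R) (d : τ →₀ ℕ) :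
    coeff d (f.subst ![X i, g.subst ![X (s 0), X (s 1)]])
      = ∑ᶠ m : ℕ, toBilateral f (d i) m * pow2 (toBilateral g) m (d (s 0)) (d (s 1)) := by
  have hsub : g.subst ![X (s 0), X (s 1)] = rename s g := by
    rw [MvPowerSeries.rename_eq_subst]
    congr 1
    ext1 j
    fin_cases j <;> rfl
  rw [hsub, coeff_subst_X_rename s hs hg]
  simp only [pow2_toBilateral]
  exact finsum_congr fun m => congrArg _ (toBilateral_natCast (g ^ m) _).symm

theorem subst_pair_comm {f : MvPowerSeries (Fin 2) R} (hf : f = f.subst ![X 1, X 0])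
    {a b : MvPowerSeries τ R} (ha : PowerSeries.HasSubst a) (hb : PowerSeries.HasSubst b) :
    f.subst ![a, b] = f.subst ![b, a] := by
  have hsubst : HasSubst ![a, b] :=
    MvPowerSeries.hasSubst_of_constantCoeff_nilpotent fun j => by fin_cases j <;> assumption
  conv_lhs => rw [hf]
  rw [MvPowerSeries.subst_comp_subst_apply HasSubst.X_X hsubst]
  congr 1
  ext1 j
  fin_cases j <;> simp [MvPowerSeries.subst_X hsubst]

theorem range_punit_one : Set.range (Embedding.punit (1 : Fin 2)) = {0}ᶜ :=
  Set.ext fun j => by fin_cases j <;> simp [Embedding.punit]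

theorem comapDomain_punit_one (d : Fin 2 →₀ ℕ) :
    d.comapDomain (Embedding.punit (1 : Fin 2)) (Embedding.injective _).injOn
      = Finsupp.single () (d 1) := by
  ext
  rw [Finsupp.comapDomain_apply, Finsupp.single_eq_same]
  rfl

theorem coeff_X_zero_mul_toMvPowerSeries_one (q : PowerSeries R) (d : Fin 2 →₀ ℕ) :
    coeff d (X 0 * q.toMvPowerSeries 1) = if 1 = d 0 then PowerSeries.coeff (d 1) q else 0 := by
  have h := coeff_X_pow_mul_rename (Embedding.punit (1 : Fin 2)) range_punit_one 1 q d
  rwa [pow_one, comapDomain_punit_one] at h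

theorem coeff_subst_X_toMvPowerSeries {g : PowerSeries R} (hg : PowerSeries.constantCoeff g = 0)
    (f : MvPowerSeries (Fin 2) R) (d : Fin 2 →₀ ℕ) :
    coeff d (f.subst ![X 0, g.toMvPowerSeries 1])
      = ∑ᶠ m : ℕ, toBilateral f (d 0) m * PowerSeries.coeff (d 1) (g ^ m) := by
  have h := coeff_subst_X_rename (Embedding.punit (1 : Fin 2)) range_punit_one hg f d
  rwa [comapDomain_punit_one] at h

theorem exists_eq_X_one_add_X_zero_mul {f : MvPowerSeries (Fin 2) R} {q : PowerSeries R}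
    (h₀ : ∀ d : Fin 2 →₀ ℕ, d 0 = 0 → coeff d f = coeff d (X 1))
    (h₁ : ∀ d : Fin 2 →₀ ℕ, d 0 = 1 → coeff d f = PowerSeries.coeff (d 1) q) :
    ∃ p, f = X 1 + X 0 * (q.toMvPowerSeries 1 + X 0 * p) := by
  classical
  have hdvd : X 0 ^ 2 ∣ f - X 1 - X 0 * q.toMvPowerSeries 1 := by
    refine MvPowerSeries.X_pow_dvd_iff.mpr fun d hd => ?_
    rw [map_sub, map_sub, coeff_X_zero_mul_toMvPowerSeries_one]
    obtain hd | hd : d 0 = 0 ∨ d 0 = 1 := by omega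
    · simp [h₀ d hd, hd]
    · have hX : d ≠ Finsupp.single 1 1 := fun h => by simp [h] at hd
      simp [h₁ d hd, hd, MvPowerSeries.coeff_X, hX]
  obtain ⟨p, hp⟩ := hdvd
  exact ⟨p, by linear_combination hp⟩

end Substitution

section Difference

variable {R : Type*} [CommRing R]

theorem exists_mul_eq_X_sub_X {f D : MvPowerSeries (Fin 2) R} {q : PowerSeries R}
    (h₀ : ∀ d : Fin 2 →₀ ℕ, d 0 = 0 → coeff d f = coeff d (X 1))
    (h₁ : ∀ d : Fin 2 →₀ ℕ, d 0 = 1 → coeff d f = PowerSeries.coeff (d 1) q)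
    (hD : constantCoeff D = 0) (hdiag : diagonal R D = 0) (hf : f.subst ![D, X 1] = X 0) :
    ∃ P, D * P = X 0 - X 1 ∧ constantCoeff P = PowerSeries.constantCoeff q ∧
      diagonal R P = q := by
  obtain ⟨p, rfl⟩ := exists_eq_X_one_add_X_zero_mul h₀ h₁
  have hsubst : HasSubst ![D, X 1] :=
    MvPowerSeries.hasSubst_of_constantCoeff_zero fun j => by fin_cases j <;> simp [hD]
  simp only [MvPowerSeries.subst_add hsubst, MvPowerSeries.subst_mul hsubst,
    MvPowerSeries.subst_X hsubst, PowerSeries.subst_toMvPowerSeries hsubst, Matrix.cons_val_zero,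
    Matrix.cons_val_one, ← PowerSeries.toMvPowerSeries_eq_subst] at hf
  refine ⟨q.toMvPowerSeries 1 + D * p.subst ![D, X 1], by linear_combination hf, ?_, ?_⟩
  · rw [map_add, map_mul, hD, zero_mul, add_zero, PowerSeries.toMvPowerSeries_apply,
      MvPowerSeries.constantCoeff_rename]
    rfl
  · rw [map_add, map_mul, hdiag, zero_mul, add_zero, MvPowerSeries.rename_toMvPowerSeries]
    exact MvPowerSeries.rename_id_apply q

theorem rename_subst_pair {σ τ : Type*} (t : σ → τ) [Filter.TendstoCofinite t]
    {a b : MvPowerSeries σ R} (ha : constantCoeff a = 0) (hb : constantCoeff b = 0)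
    (f : MvPowerSeries (Fin 2) R) :
    rename t (f.subst ![a, b]) = f.subst ![rename t a, rename t b] := by
  have hsubst : HasSubst ![a, b] :=
    MvPowerSeries.hasSubst_of_constantCoeff_zero fun j => by fin_cases j <;> assumption
  rw [MvPowerSeries.rename_eq_subst, MvPowerSeries.subst_comp_subst_apply hsubst
    (MvPowerSeries.HasSubst.X_comp t)]
  congr 1
  ext1 j
  fin_cases j <;> exact (MvPowerSeries.rename_eq_subst ..).symm

theorem constantCoeff_toMvPowerSeries_eq_zero {σ : Type*} {ι : PowerSeries R}
    (hι : PowerSeries.constantCoeff ι = 0) (i : σ) : constantCoeff (ι.toMvPowerSeries i) = 0 :=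
  (MvPowerSeries.constantCoeff_rename _ _).trans hι

/-- The formal difference `G(z, ι(w))`, where `ι` is the inversion of the formal group `G`. -/
def difference (G : FormalGroup R) (ι : PowerSeries R) : MvPowerSeries (Fin 2) R :=
  G.toPowerSeries.subst ![X 0, ι.toMvPowerSeries 1]

theorem constantCoeff_difference (G : FormalGroup R) {ι : PowerSeries R}
    (hι : PowerSeries.constantCoeff ι = 0) : constantCoeff (difference G ι) = 0 := by
  have hconst (j : Fin 2) : constantCoeff (![X 0, ι.toMvPowerSeries (1 : Fin 2)] j) = 0 := by
    fin_cases j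
    exacts [MvPowerSeries.constantCoeff_X 0, constantCoeff_toMvPowerSeries_eq_zero hι 1]
  exact MvPowerSeries.constantCoeff_subst_eq_zero
    (MvPowerSeries.hasSubst_of_constantCoeff_zero hconst) hconst G.zero_constantCoeff

theorem subst_difference_X_one (G : FormalGroup R) [G.IsComm] {ι : PowerSeries R}
    (hι : PowerSeries.constantCoeff ι = 0) (hinv : diagonal R (difference G ι) = 0) :
    G.toPowerSeries.subst ![difference G ι, X 1] = X 0 := by
  have hX (i : Fin 2) : PowerSeries.HasSubst (X i : MvPowerSeries (Fin 2) R) :=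
    PowerSeries.HasSubst.X i
  have hι₁ := constantCoeff_toMvPowerSeries_eq_zero hι (1 : Fin 2)
  have hιS := PowerSeries.HasSubst.of_constantCoeff_zero hι₁
  have hcancel : G.toPowerSeries.subst ![X 1, ι.toMvPowerSeries (1 : Fin 2)] = 0 := by
    have h := congrArg (rename fun _ => (1 : Fin 2)) hinv
    rwa [diagonal, MvPowerSeries.rename_rename, difference,
      rename_subst_pair _ (MvPowerSeries.constantCoeff_X 0) hι₁, MvPowerSeries.rename_X,
      MvPowerSeries.rename_toMvPowerSeries, map_zero] at h
  rw [difference, G.assoc' (hX 0) hιS (hX 1), G.comm' hιS (hX 1), hcancel, G.add_zero (hX 0)]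

end Difference

end FormalSeries

namespace FormalGroupLaw

open Function FormalSeries
open MvPowerSeries (X coeff constantCoeff rename subst HasSubst)

variable {R : Type*} [CommRing R] (𝓕 : FormalGroupLaw R)

/-- The double power series `F(z, w)`. -/
def series : MvPowerSeries (Fin 2) R :=
  fun d => 𝓕.F (d 0) (d 1)

theorem coeff_series (d : Fin 2 →₀ ℕ) : coeff d 𝓕.series = 𝓕.F (d 0) (d 1) :=
  rfl

theorem F_eq_toBilateral : 𝓕.F = toBilateral 𝓕.series :=
  eq_toBilateral 𝓕.F_supp fun _ => rfl

theorem coeff_series_of_left_eq_zero {d : Fin 2 →₀ ℕ} (hd : d 0 = 0) :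
    coeff d 𝓕.series = coeff d (X 1) := by
  classical
  have h : d = Finsupp.single 1 1 ↔ d 1 = 1 :=
    ⟨fun h => by simp [h], fun h => Finsupp.ext fun j => by fin_cases j <;> simp [hd, h]⟩
  rw [coeff_series, hd, Nat.cast_zero, 𝓕.F_comm, 𝓕.F_modw, MvPowerSeries.coeff_X]
  simp only [Nat.cast_eq_one, h]

theorem constantCoeff_series : constantCoeff 𝓕.series = 0 :=
  (𝓕.F_modw 0).trans (if_neg zero_ne_one)

theorem series_comm : 𝓕.series = 𝓕.series.subst ![X 1, X 0] := by
  have hswap : ![X 1, X 0] = (X : _ → MvPowerSeries (Fin 2) R) ∘ (Equiv.swap (0 : Fin 2) 1) := by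
    ext1 j
    fin_cases j <;> simp
  rw [hswap, ← MvPowerSeries.rename_eq_subst]
  ext d
  obtain ⟨d, rfl⟩ : ∃ c : Fin 2 →₀ ℕ, d = c.embDomain (Equiv.swap 0 1).toEmbedding :=
    ⟨d.equivMapDomain (Equiv.swap 0 1), by
      rw [Finsupp.embDomain_eq_mapDomain]
      ext j
      fin_cases j <;> simp [Finsupp.mapDomain_equiv_apply]⟩
  refine .trans ?_ (MvPowerSeries.coeff_embDomain_rename _ _ d).symm
  have h₀ := Finsupp.embDomain_apply_self (Equiv.swap (0 : Fin 2) 1).toEmbedding d 1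
  have h₁ := Finsupp.embDomain_apply_self (Equiv.swap (0 : Fin 2) 1).toEmbedding d 0
  rw [Equiv.toEmbedding_apply, Equiv.swap_apply_right] at h₀
  rw [Equiv.toEmbedding_apply, Equiv.swap_apply_left] at h₁
  rw [coeff_series, coeff_series, h₀, h₁, F_comm]

theorem series_assoc :
    𝓕.series.subst ![𝓕.series.subst ![X 0, X 1], X 2]
      = (𝓕.series.subst ![X 0, 𝓕.series.subst ![X 1, X 2]] : MvPowerSeries (Fin 3) R) := by
  have hS : PowerSeries.HasSubst
      (𝓕.series.subst ![X 0, X 1] : MvPowerSeries (Fin 3) R) :=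
    (HasSubst.cons_subst_zero_left 0 1 2 𝓕.constantCoeff_series).const_coeff 0
  rw [subst_pair_comm 𝓕.series_comm hS (PowerSeries.HasSubst.X 2)]
  ext d
  have hl := coeff_subst_X_subst_X_X Fin.castSuccEmb (i := 2) (by ext j; fin_cases j <;> simp)
    𝓕.constantCoeff_series 𝓕.series d
  have hr := coeff_subst_X_subst_X_X (Fin.succEmb 2) (i := 0) (by ext j; fin_cases j <;> simp)
    𝓕.constantCoeff_series 𝓕.series d
  simp only [← F_eq_toBilateral] at hl hr
  refine hl.trans (.trans ?_ hr.symm)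
  refine (finsum_congr fun m => ?_).trans (𝓕.F_assoc _ _ _)
  rw [𝓕.F_comm]
  rfl

/-- The formal group of `F`. -/
def toFormalGroup : FormalGroup R where
  toPowerSeries := 𝓕.series
  zero_constantCoeff := 𝓕.constantCoeff_series
  lin_coeff_X := by simp [coeff_series, F_modw]
  lin_coeff_Y := by simp [coeff_series, 𝓕.F_comm 0, F_modw]
  assoc := 𝓕.series_assoc

instance : 𝓕.toFormalGroup.IsComm :=
  ⟨𝓕.series_comm⟩

/-- The power series `ι(z)`. -/
def invSeries : PowerSeries R :=
  PowerSeries.mk fun n => 𝓕.inv n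

theorem constantCoeff_invSeries : PowerSeries.constantCoeff 𝓕.invSeries = 0 := by
  rw [← PowerSeries.coeff_zero_eq_constantCoeff_apply, invSeries, PowerSeries.coeff_mk]
  exact 𝓕.inv_supp 0 one_pos

theorem pow1_inv (k : ℕ) : pow1 𝓕.inv k = (𝓕.invSeries ^ k : LaurentSeries R).coeff := by
  rw [← pow1_coeff, invSeries, coeff_coe_mk fun n hn => 𝓕.inv_supp n (hn.trans one_pos)]

theorem pow1_inv_eq_zero {k : ℕ} {n : ℤ} (h : n < k) : pow1 𝓕.inv k n = 0 := by
  rw [pow1_inv, ← PowerSeries.coe_pow, PowerSeries.coeff_coe]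
  split_ifs with hn
  · rfl
  · have hdvd : PowerSeries.X ^ k ∣ 𝓕.invSeries ^ k :=
      pow_dvd_pow_of_dvd (PowerSeries.X_dvd_iff.mpr 𝓕.constantCoeff_invSeries) k
    exact PowerSeries.X_pow_dvd_iff.mp hdvd _ (by omega)

theorem Fzi_eq_toBilateral :
    𝓕.Fzi = toBilateral (difference 𝓕.toFormalGroup 𝓕.invSeries) := by
  refine eq_toBilateral (fun i j h => finsum_eq_zero_of_forall_eq_zero fun m => ?_) fun d => ?_
  · obtain hi | hj := h
    · rw [𝓕.F_supp i m (Or.inl hi), zero_mul]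
    · rw [𝓕.pow1_inv_eq_zero (hj.trans_le (Nat.cast_nonneg m)), mul_zero]
  · refine .trans ?_ (coeff_subst_X_toMvPowerSeries 𝓕.constantCoeff_invSeries 𝓕.series d).symm
    simp only [Fzi, ← F_eq_toBilateral, pow1_inv, ← PowerSeries.coe_pow,
      LaurentSeries.coeff_coe_powerSeries]

theorem finite_support_inv_eq (n : ℤ) :
    (support fun p : ℤ × ℕ => 𝓕.F p.1 p.2 * pow1 𝓕.inv p.2 (n - p.1)).Finite := by
  refine ((Set.finite_Icc 0 n).prod (Set.finite_Iic n.toNat)).subset fun p hp => ?_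
  have h₀ : 0 ≤ p.1 := not_lt.mp fun h => left_ne_zero_of_mul hp (𝓕.F_supp _ _ (Or.inl h))
  have h₁ : (p.2 : ℤ) ≤ n - p.1 := not_lt.mp fun h => right_ne_zero_of_mul hp (𝓕.pow1_inv_eq_zero h)
  exact ⟨⟨h₀, by omega⟩, Set.mem_Iic.mpr (by omega)⟩

theorem diagonal_difference :
    diagonal R (difference 𝓕.toFormalGroup 𝓕.invSeries) = 0 := by
  have hanti (n : ℤ) : {s : ℤ × ℤ | s.1 + s.2 = n} = Set.range fun i => (i, n - i) :=
    Set.ext fun s => ⟨fun (h : _ = n) => ⟨s.1, Prod.ext rfl (by dsimp; omega)⟩,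
      fun ⟨i, hi⟩ => hi ▸ add_sub_cancel i n⟩
  apply HahnSeries.ofPowerSeries_injective (Γ := ℤ)
  ext n
  refine (finsum_antidiagonal_toBilateral _ n).symm.trans ?_
  rw [hanti, finsum_mem_range fun i j h => congrArg Prod.fst h, ← Fzi_eq_toBilateral, map_zero,
    HahnSeries.coeff_zero, ← 𝓕.inv_eq n]
  exact (finsum_curry _ (𝓕.finite_support_inv_eq n)).symm

/-- The power series `F^{1,0}(0, w)`, the inverse of `p_F(w)`. -/
def invPF : PowerSeries R :=
  PowerSeries.mk fun n => 𝓕.F 1 n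

theorem constantCoeff_invPF : PowerSeries.constantCoeff 𝓕.invPF = 1 := by
  rw [← PowerSeries.coeff_zero_eq_constantCoeff_apply, invPF, PowerSeries.coeff_mk]
  exact (𝓕.F_modw 1).trans (if_pos rfl)

theorem exists_difference_eq :
    ∃ Q P : MvPowerSeries (Fin 2) R, Q * P = 1 ∧ constantCoeff Q = 1 ∧ diagonal R P = 𝓕.invPF ∧
      difference 𝓕.toFormalGroup 𝓕.invSeries = (X 0 - X 1) * Q := by
  obtain ⟨P, hP, hP₀, hdiag⟩ := exists_mul_eq_X_sub_X (f := 𝓕.series) (q := 𝓕.invPF)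
    (fun d => 𝓕.coeff_series_of_left_eq_zero)
    (fun d hd => by simp [coeff_series, hd, invPF])
    (constantCoeff_difference _ 𝓕.constantCoeff_invSeries) 𝓕.diagonal_difference
    (subst_difference_X_one _ 𝓕.constantCoeff_invSeries 𝓕.diagonal_difference)
  rw [𝓕.constantCoeff_invPF] at hP₀
  have hunit : IsUnit P := MvPowerSeries.isUnit_iff_constantCoeff.mpr (hP₀ ▸ isUnit_one)
  obtain ⟨Q, hPQ⟩ := hunit.exists_right_inv
  refine ⟨Q, P, mul_comm P Q ▸ hPQ, ?_, hdiag, ?_⟩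
  · have h := congrArg constantCoeff hPQ
    rwa [map_mul, hP₀, one_mul, map_one] at h
  · rw [← hP, mul_assoc, hPQ, mul_one]

theorem delta_eq (a b : ℤ) : 𝓕.delta a b = (𝓕.invPF : LaurentSeries R).coeff (a + b + 1) := by
  obtain ⟨Q, P, hQP, hQ, hdiag, hD⟩ := 𝓕.exists_difference_eq
  rw [delta, Fzi_eq_toBilateral, hD, izwPow_sub_iwzPowNeg_X_sub_X_mul hQ hQP, hdiag]

theorem mulS_pF_invPF : mulS 𝓕.pF (𝓕.invPF : LaurentSeries R).coeff = oneS R := by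
  have hunit : IsUnit 𝓕.invPF :=
    PowerSeries.isUnit_iff_constantCoeff.mpr (𝓕.constantCoeff_invPF ▸ isUnit_one)
  obtain ⟨p, hp⟩ := hunit.exists_right_inv
  have hF : (fun i => 𝓕.F i 1) = (𝓕.invPF : LaurentSeries R).coeff := by
    rw [invPF, coeff_coe_mk fun n hn => 𝓕.F_supp 1 n (Or.inr hn)]
    exact funext fun i => 𝓕.F_comm i 1
  have hpos : 0 < ((𝓕.invPF : LaurentSeries R) - 1).orderTop := by
    rw [← PowerSeries.coe_one, ← PowerSeries.coe_sub]
    exact orderTop_coe_pos (by rw [map_sub, constantCoeff_invPF, map_one, sub_self])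
  rw [pF, hF, invOne_coeff hpos (by rw [← PowerSeries.coe_mul, hp, PowerSeries.coe_one]),
    mulS_coeff, ← PowerSeries.coe_mul, mul_comm, hp, PowerSeries.coe_one, oneS_eq_coeff_one]

theorem finsum_pF_mul_delta (a b : ℤ) :
    ∑ᶠ i : ℤ, 𝓕.pF i * 𝓕.delta (a - i) b = if a + b = -1 then 1 else 0 := by
  calc
    _ = mulS 𝓕.pF (𝓕.invPF : LaurentSeries R).coeff (a + b + 1) := finsum_congr fun i => by
      rw [delta_eq, smul_eq_mul]
      congr 2
      ring
    _ = _ := by rw [mulS_pF_invPF, oneS]; simp only [add_eq_zero_iff_eq_neg]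

theorem delta_comm (a b : ℤ) : 𝓕.delta a b = 𝓕.delta b a := by
  rw [delta_eq, delta_eq, add_comm a b]

end FormalGroupLaw

end

/-- `z⁻¹δ_F(w/z)·p_F(z) = z⁻¹δ_{F_a}(w/z) = ∑_{n∈ℤ} wⁿ z^{-n-1}`
(coefficient of `z^a w^b`), and consequently both `F`-residues of `z⁻¹δ_F(w/z)`
(in `z`, resp. in `w`) are equal to `1`. -/
theorem deltaF_pF (R : Type*) [CommRing R] (𝓕 : FormalGroupLaw R) :
    (∀ a b : ℤ, (∑ᶠ i : ℤ, 𝓕.pF i * 𝓕.delta (a - i) b)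
        = if a + b = -1 then 1 else 0) ∧
    (∀ b : ℤ, 𝓕.resF (fun a => 𝓕.delta a b) = if b = 0 then (1 : R) else 0) ∧
    (∀ a : ℤ, 𝓕.resF (fun b => 𝓕.delta a b) = if a = 0 then (1 : R) else 0) := by
  refine ⟨𝓕.finsum_pF_mul_delta, fun b => ?_, fun a => ?_⟩
  · exact (𝓕.finsum_pF_mul_delta (-1) b).trans (by simp)
  · simp only [FormalGroupLaw.resF, 𝓕.delta_comm a]
    exact (𝓕.finsum_pF_mul_delta (-1) a).trans (by simp)
end

section
/- Let F be a formal group law over a commutative ring R. For all f, g ∈ R((z)), λ ∈ R, and m, n ≥ 0: 𝒮^F_0 f = f; (𝒮^F_1 f)·p_F = f' (the formal derivative), i.e. (𝒮^F_1 f)(z)·F^{0,1}(z,0)^{-1} = f'(z); 𝒮^F_n(λf + g) = λ𝒮^F_n f + 𝒮^F_n g; the Leibniz rule 𝒮^F_n(f·g) = Σ_{i+j=n} (𝒮^F_i f)·(𝒮^F_j g); and the composition rule 𝒮^F_m(𝒮^F_n f) = 𝒮^F_n(𝒮^F_m f) = Σ_{k≥0} binomF(k; m,n)·𝒮^F_k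 f, where the sum is finite (binomF(k; m,n) = 0 for k > m+n). -/
/-!
Coefficient-wise formal calculus for vertex `F`-algebras, following
M. Upmeier, "Vertex F-Algebras and Their Associated Lie Algebra".

Series in one, two or three variables are represented by their coefficient
functions `ℤ → R`, `ℤ → ℤ → R`, …; products are given by coefficient-wise
(finite) sums, expressed via `finsum` (`∑ᶠ`).
-/

open scoped BigOperators

/-!
The shift `f(z) ↦ f(F(z,w))` is a ring homomorphism `R((z)) → R((z))((w))` whose coefficients in
`w` are the hyperderivatives, so linearity and the Leibniz rule are its additivity and
multiplicativity. Applied twice, it gives the homomorphism `f(z) ↦ f(F(F(z,v),w))`, with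
coefficients `𝒮_m 𝒮_n f`, while shifting `v` to `F(v,w)` in `f(F(z,v))` gives
`f(z) ↦ f(F(z,F(v,w)))`, with coefficients `∑_k binomF(k;m,n) 𝒮_k f`. By associativity of `F` both
homomorphisms take the same value at `z`; being homomorphisms they agree on all monomials `r z^i`,
and each coefficient of the result only depends on finitely many coefficients of `f`.
-/

noncomputable section FormalCalculus

open HahnSeries
open scoped LaurentSeries

variable {R : Type*} [CommRing R]

theorem zbinom_eq_choose (n : ℤ) (k : ℕ) : zbinom n k = Ring.choose n k := by
  unfold zbinom
  split_ifs with h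
  · lift n to ℕ using h
    simpa using (Ring.choose_natCast (R := ℤ) n k).symm
  · obtain ⟨r, rfl⟩ : ∃ r : ℕ, n = -(r + 1 : ℤ) := ⟨(-n - 1).toNat, by omega⟩
    rw [Ring.choose_neg, show (k : ℤ) - -(r + 1 : ℤ) - 1 = ((r + k : ℕ) : ℤ) by push_cast; ring,
      show (r + 1 : ℤ) + k - 1 = ((r + k : ℕ) : ℤ) by push_cast; ring, Ring.choose_natCast,
      Int.toNat_natCast]
    simp [Units.smul_def, Int.coe_negOnePow_natCast]

theorem finsum_int_eq_finsum_nat {A : Type*} [AddCommMonoid A] {g : ℤ → A}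
    (hg : ∀ i < 0, g i = 0) : ∑ᶠ i, g i = ∑ᶠ n : ℕ, g n := by
  rw [← finsum_mem_range (f := g) (g := ((↑) : ℕ → ℤ)) Nat.cast_injective, finsum_mem_def,
    Set.indicator_eq_self.mpr]
  intro i hi
  exact ⟨i.toNat, Int.toNat_of_nonneg (not_lt.mp fun h => hi (hg i h))⟩

theorem bddBelow_support_of_forall_lt {A : Type*} [Zero A] {f : ℤ → A} {N : ℤ}
    (hf : ∀ i < N, f i = 0) : BddBelow (Function.support f) :=
  ⟨N, fun i hi => not_lt.mp fun h => hi (hf i h)⟩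

theorem exists_laurentSeries {f : ℤ → R} (hf : IsLaurent f) : ∃ x : R⸨X⸩, x.coeff = f := by
  obtain ⟨N, hN⟩ := hf
  exact ⟨ofSuppBddBelow f (bddBelow_support_of_forall_lt hN), rfl⟩

theorem isLaurent_fderiv1 {f : ℤ → R} (hf : IsLaurent f) : IsLaurent (fderiv1 f) := by
  obtain ⟨N, hN⟩ := hf
  exact ⟨N - 1, fun n hn => by rw [fderiv1, hN _ (by omega), mul_zero]⟩

theorem finite_support_coeff_mul (x y : R⸨X⸩) (n : ℤ) :
    (Function.support fun i => x.coeff i * y.coeff (n - i)).Finite := by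
  refine (Set.finite_Icc x.order (n - y.order)).subset fun i hi => ⟨?_, ?_⟩
  · exact order_le_of_coeff_ne_zero (left_ne_zero_of_mul hi)
  · exact le_sub_comm.mp (order_le_of_coeff_ne_zero (right_ne_zero_of_mul hi))

theorem coeff_mul_eq_finsum (x y : R⸨X⸩) (n : ℤ) :
    (x * y).coeff n = ∑ᶠ i, x.coeff i * y.coeff (n - i) := by
  classical
  rw [coeff_mul, finsum_eq_sum_of_support_subset
    (s := (Finset.antidiagonal x.isPWO_support y.isPWO_support n).image Prod.fst),
    Finset.sum_image]
  · refine Finset.sum_congr rfl fun p hp => ?_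
    rw [← (Finset.mem_antidiagonal.mp hp).2.2, add_sub_cancel_left]
  · intro p hp q hq h
    rw [Finset.mem_coe, Finset.mem_antidiagonal] at hp hq
    ext <;> grind
  · intro i hi
    exact Finset.mem_image.mpr ⟨(i, n - i), Finset.mem_antidiagonal.mpr
      ⟨left_ne_zero_of_mul hi, right_ne_zero_of_mul hi, add_sub_cancel i n⟩, rfl⟩

theorem coeff_mul_eq_zero_of_lt {x y : R⸨X⸩} {N M : ℤ} (hx : ∀ i < N, x.coeff i = 0)
    (hy : ∀ i < M, y.coeff i = 0) (n : ℤ) (h : n < N + M) : (x * y).coeff n = 0 := by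
  rw [coeff_mul_eq_finsum, ← finsum_zero (α := ℤ)]
  refine finsum_congr fun i => ?_
  rcases lt_or_ge i N with hi | hi
  · rw [hx i hi, zero_mul]
  · rw [hy _ (by omega), mul_zero]

theorem mulS_coeff (x y : R⸨X⸩) : mulS x.coeff y.coeff = (x * y).coeff := by
  funext n
  simp only [mulS, smul_eq_mul, coeff_mul_eq_finsum]

theorem oneS_eq_coeff : oneS R = (1 : R⸨X⸩).coeff := by
  funext n
  simp [oneS, coeff_one]

theorem pow1_coeff (x : R⸨X⸩) (k : ℕ) : pow1 x.coeff k = (x ^ k).coeff := by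
  induction k with
  | zero => rw [pow1, pow_zero, oneS_eq_coeff]
  | succ k ih => rw [pow1, ih, mulS_coeff, pow_succ']

theorem coeff_mul_eq_sum_range {x y : R⸨X⸩} (hx : ∀ i < 0, x.coeff i = 0)
    (hy : ∀ i < 0, y.coeff i = 0) (n : ℕ) :
    (x * y).coeff n = ∑ j ∈ Finset.range (n + 1), x.coeff j * y.coeff (n - j : ℕ) := by
  rw [coeff_mul_eq_finsum, finsum_int_eq_finsum_nat fun i hi => by rw [hx i hi, zero_mul],
    finsum_eq_sum_of_support_subset (s := Finset.range (n + 1))]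
  · refine Finset.sum_congr rfl fun j hj => ?_
    rw [Nat.cast_sub (Finset.mem_range_succ_iff.mp hj)]
  · intro j hj
    have : ¬ (n - j : ℤ) < 0 := fun h => right_ne_zero_of_mul hj (hy _ h)
    simp only [Finset.coe_range, Set.mem_Iio]
    omega

theorem invOne_coeff_mul {u : R⸨X⸩} (hu : 0 < (1 - u).orderTop) :
    ∃ v : R⸨X⸩, invOne u.coeff = v.coeff ∧ v * u = 1 := by
  refine ⟨(SummableFamily.powers (1 - u)).hsum, ?_, ?_⟩
  · funext a
    have hOne : hOneS u.coeff = (u - 1).coeff := by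
      funext j
      rw [hOneS, oneS_eq_coeff, coeff_sub]
    rw [invOne, hOne, SummableFamily.coeff_hsum]
    refine finsum_congr fun k => ?_
    have hneg : (1 - u) ^ k = C ((-1 : R) ^ k) * (u - 1) ^ k := by
      rw [← neg_sub u 1, neg_pow, map_pow, map_neg, map_one]
    rw [pow1_coeff, SummableFamily.powers_of_orderTop_pos hu, hneg, C_apply,
      coeff_single_zero_mul]
  · simpa [mul_comm] using SummableFamily.one_sub_self_mul_hsum_powers hu

theorem addMonoidHom_ext_single {A : Type*} [AddCommMonoid A] {θ₁ θ₂ : R⸨X⸩ →+ A}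
    (hs : ∀ i r, θ₁ (single i r) = θ₂ (single i r)) (N : ℤ)
    (hN : ∀ f : R⸨X⸩, (∀ i < N, f.coeff i = 0) → θ₁ f = θ₂ f) : θ₁ = θ₂ := by
  ext f
  set p : R⸨X⸩ := ∑ i ∈ Finset.Ico f.order N, single i (f.coeff i) with hp
  have htail : ∀ i < N, (f - p).coeff i = 0 := fun i hi => by
    rw [coeff_sub, hp, coeff_sum, Finset.sum_eq_single i, coeff_single_same, sub_self]
    · exact fun j _ hj => coeff_single_of_ne hj.symm
    · intro h
      rw [coeff_single_same]
      exact coeff_eq_zero_of_lt_order (not_le.mp fun h' => h (Finset.mem_Ico.mpr ⟨h', hi⟩))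
  rw [← sub_add_cancel f p, map_add, map_add, hN _ htail, hp, map_sum, map_sum]
  simp only [hs]

theorem addMonoidHom_ext_single₂ {A : Type*} [AddCommMonoid A] {β₁ β₂ : R⸨X⸩ →+ R⸨X⸩ →+ A}
    (hs : ∀ i r j s, β₁ (single i r) (single j s) = β₂ (single i r) (single j s)) (d : ℤ)
    (hd : ∀ (f g : R⸨X⸩) (N M : ℤ), (∀ i < N, f.coeff i = 0) → (∀ i < M, g.coeff i = 0) →
      d ≤ N + M → β₁ f g = β₂ f g) : β₁ = β₂ := by
  ext f g
  have hsingle (i : ℤ) (r : R) : β₁ (single i r) = β₂ (single i r) :=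
    addMonoidHom_ext_single (hs i r) (d - i) fun g hg =>
      hd _ g i _ (fun j hj => coeff_single_of_ne hj.ne) hg (by omega)
  have hflip : β₁.flip g = β₂.flip g :=
    addMonoidHom_ext_single (fun i r => DFunLike.congr_fun (hsingle i r) g) (d - g.order)
      fun f hf => hd f g _ g.order hf (fun _ => coeff_eq_zero_of_lt_order) (by omega)
  exact DFunLike.congr_fun hflip f

theorem ringHom_single_eq {A : Type*} [Semiring A] {θ₁ θ₂ : R⸨X⸩ →+* A}
    (hC : ∀ r, θ₁ (C r) = θ₂ (C r)) (hX : θ₁ (single 1 1) = θ₂ (single 1 1)) (i : ℤ) (r : R) :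
    θ₁ (single i r) = θ₂ (single i r) := by
  let powX : Multiplicative ℤ →* R⸨X⸩ :=
    { toFun i := single i.toAdd 1
      map_one' := rfl
      map_mul' i j := by rw [single_mul_single, mul_one, toAdd_mul] }
  have hpow : (θ₁ : R⸨X⸩ →* A).comp powX = (θ₂ : R⸨X⸩ →* A).comp powX := MonoidHom.ext_mint hX
  have hsingle : (single i r : R⸨X⸩) = C r * powX (.ofAdd i) := by
    change _ = C r * single i 1
    rw [C_apply, single_mul_single, zero_add, mul_one]
  rw [hsingle, map_mul, map_mul, hC]
  exact congrArg _ (DFunLike.congr_fun hpow (.ofAdd i))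

section IteratedLaurentSeries

/-- The coefficient of `z^a w^b` in an element of `R((z))((w))`. The inner variable `z` comes
first, although it is the coefficient of the outer variable `w` that is extracted first. -/
def coeff₂ (P : R⸨X⸩⸨X⸩) (a b : ℤ) : R := (P.coeff b).coeff a

/-- The element of `R((z))((w))` with prescribed coefficients, available for arrays without
negative powers of `w` and of total degree bounded below. -/
def ofCoeff₂ (G : ℤ → ℤ → R) (N : ℤ) (hneg : ∀ a, ∀ b < 0, G a b = 0)
    (hdeg : ∀ a b, a + b < N → G a b = 0) : R⸨X⸩⸨X⸩ :=
  ofSuppBddBelow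
    (fun b => ofSuppBddBelow (fun a => G a b)
      (bddBelow_support_of_forall_lt fun a ha => hdeg a b (lt_sub_iff_add_lt.mp ha)))
    (bddBelow_support_of_forall_lt fun b hb => HahnSeries.ext (funext fun a => hneg a b hb))

theorem coeff₂_ofCoeff₂ (G : ℤ → ℤ → R) (N : ℤ) (hneg : ∀ a, ∀ b < 0, G a b = 0)
    (hdeg : ∀ a b, a + b < N → G a b = 0) : coeff₂ (ofCoeff₂ G N hneg hdeg) = G :=
  rfl

theorem coeff₂_injective : Function.Injective (coeff₂ : R⸨X⸩⸨X⸩ → ℤ → ℤ → R) := fun _ _ h =>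
  HahnSeries.ext <| funext fun b => HahnSeries.ext <| funext fun a => congrFun₂ h a b

theorem finite_support_coeff₂_mul (P Q : R⸨X⸩⸨X⸩) (a b : ℤ) :
    (Function.support fun p : ℤ × ℤ =>
      coeff₂ P p.1 p.2 * coeff₂ Q (a - p.1) (b - p.2)).Finite := by
  refine ((Set.finite_Icc P.order (b - Q.order)).biUnion fun j _ =>
    (finite_support_coeff_mul (P.coeff j) (Q.coeff (b - j)) a).image (·, j)).subset
    fun p hp => ?_
  have hP : P.coeff p.2 ≠ 0 := fun h => left_ne_zero_of_mul hp (by rw [coeff₂, h, coeff_zero])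
  have hQ : Q.coeff (b - p.2) ≠ 0 := fun h =>
    right_ne_zero_of_mul hp (by rw [coeff₂, h, coeff_zero])
  exact Set.mem_biUnion
    ⟨order_le_of_coeff_ne_zero hP, le_sub_comm.mp (order_le_of_coeff_ne_zero hQ)⟩ ⟨p.1, hp, rfl⟩

theorem mulS2_coeff₂ (P Q : R⸨X⸩⸨X⸩) : mulS2 (coeff₂ P) (coeff₂ Q) = coeff₂ (P * Q) := by
  funext a b
  have hfin : (fun j => P.coeff j * Q.coeff (b - j)).HasFiniteSupport :=
    finite_support_coeff_mul P Q b
  calc mulS2 (coeff₂ P) (coeff₂ Q) a b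
      = ∑ᶠ p : ℤ × ℤ, coeff₂ P p.2 p.1 * coeff₂ Q (a - p.2) (b - p.1) :=
        (finsum_comp_equiv (Equiv.prodComm ℤ ℤ)).symm
    _ = ∑ᶠ j, ∑ᶠ i, coeff₂ P i j * coeff₂ Q (a - i) (b - j) :=
        finsum_curry _ ((finite_support_coeff₂_mul P Q a b).preimage
          (Equiv.prodComm ℤ ℤ).injective.injOn)
    _ = ∑ᶠ j, (P.coeff j * Q.coeff (b - j)).coeff a := by simp only [coeff_mul_eq_finsum, coeff₂]
    _ = coeff₂ (P * Q) a b := by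
        rw [coeff₂, coeff_mul_eq_finsum]
        exact (AddMonoidHom.map_finsum (coeff.addMonoidHom a) hfin).symm

theorem oneS2_eq_coeff₂ : oneS2 R = coeff₂ (1 : R⸨X⸩⸨X⸩) := by
  funext a b
  by_cases hb : b = 0 <;> simp [oneS2, coeff₂, coeff_one, hb]

theorem pow2_coeff₂ (P : R⸨X⸩⸨X⸩) (k : ℕ) : pow2 (coeff₂ P) k = coeff₂ (P ^ k) := by
  induction k with
  | zero => rw [pow2, pow_zero, oneS2_eq_coeff₂]
  | succ k ih => rw [pow2, ih, mulS2_coeff₂, pow_succ']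

theorem pow2_comm {G : ℤ → ℤ → R} (hG : ∀ i j, G i j = G j i) (k : ℕ) (a b : ℤ) :
    pow2 G k a b = pow2 G k b a := by
  induction k generalizing a b with
  | zero => simp only [pow2, oneS2, and_comm]
  | succ k ih =>
    rw [pow2, mulS2, mulS2, ← finsum_comp_equiv (Equiv.prodComm ℤ ℤ)]
    refine finsum_congr fun p => ?_
    rw [Equiv.prodComm_apply, Prod.fst_swap, Prod.snd_swap, hG, ih]

theorem coeff₂_C_mul (x : R⸨X⸩) (P : R⸨X⸩⸨X⸩) (a b : ℤ) :
    coeff₂ (C x * P) a b = (x * P.coeff b).coeff a := by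
  rw [coeff₂, C_apply, coeff_single_zero_mul]

/-- Every monomial `z^a w^b` occurring in `P` has total degree `a + b ≥ d`. -/
def DegGE (d : ℤ) (P : R⸨X⸩⸨X⸩) : Prop := ∀ a b, a + b < d → coeff₂ P a b = 0

theorem DegGE.mul {d e : ℤ} {P Q : R⸨X⸩⸨X⸩} (hP : DegGE d P) (hQ : DegGE e Q) :
    DegGE (d + e) (P * Q) := by
  intro a b h
  rw [← mulS2_coeff₂, mulS2, ← finsum_zero (α := ℤ × ℤ)]
  refine finsum_congr fun p => ?_
  rcases lt_or_ge (p.1 + p.2) d with hp | hp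
  · rw [hP _ _ hp, zero_smul]
  · rw [hQ _ _ (by omega), smul_zero]

theorem DegGE.pow {P : R⸨X⸩⸨X⸩} (hP : DegGE 0 P) (k : ℕ) : DegGE 0 (P ^ k) := by
  induction k with
  | zero =>
    intro a b h
    rw [pow_zero, ← oneS2_eq_coeff₂, oneS2, if_neg (by omega)]
  | succ k ih => rw [pow_succ]; exact ih.mul hP

/-- The ring homomorphism `A((w)) → B((w))` applying `θ : A → B` to each coefficient. -/
def mapCoeff {A B : Type*} [Semiring A] [Semiring B] (θ : A →+* B) : A⸨X⸩ →+* B⸨X⸩ where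
  toFun P := P.map θ
  map_one' := HahnSeries.map_one θ.toMonoidWithZeroHom
  map_mul' _ _ := HahnSeries.map_mul (θ : A →ₙ+* B)
  map_zero' := HahnSeries.map_zero (θ : ZeroHom A B)
  map_add' _ _ := HahnSeries.map_add θ.toAddMonoidHom

theorem mapCoeff_C {A B : Type*} [Semiring A] [Semiring B] (θ : A →+* B) (x : A) :
    mapCoeff θ (C x) = C (θ x) :=
  map_C x θ

end IteratedLaurentSeries

/-- `G(z,w)` is a power series with `G(z,0) = z`: a deformation, with parameter `w`, of the
coordinate `z`. The shift `f(z) ↦ f(G(z,w))` is defined for such series. -/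
structure IsDeformation (G : ℤ → ℤ → R) : Prop where
  eq_zero_of_neg : ∀ i j, i < 0 ∨ j < 0 → G i j = 0
  right_zero : ∀ i, G i 0 = if i = 1 then 1 else 0

namespace IsDeformation

variable {G : ℤ → ℤ → R} (hG : IsDeformation G)
include hG

theorem hzS_of_nonpos (i : ℤ) {j : ℤ} (hj : j ≤ 0) : hzS G i j = 0 := by
  rcases hj.lt_or_eq with hj | rfl
  · rw [hzS, oneS2, hG.eq_zero_of_neg _ _ (.inr hj), if_neg (by omega), sub_zero]
  · simp [hzS, oneS2, hG.right_zero]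

theorem hzS_of_add_neg (i j : ℤ) (h : i + j < 0) : hzS G i j = 0 := by
  rcases le_or_gt j 0 with hj | hj
  · exact hG.hzS_of_nonpos i hj
  · rw [hzS, oneS2, hG.eq_zero_of_neg _ _ (.inl (by omega)), if_neg (by omega), sub_zero]

/-- The series `(G - z) / z` as an element of `R((z))((w))`. -/
def hz : R⸨X⸩⸨X⸩ :=
  ofCoeff₂ (hzS G) 0 (fun i _ hj => hG.hzS_of_nonpos i hj.le) hG.hzS_of_add_neg

theorem coeff₂_hz : coeff₂ hG.hz = hzS G :=
  coeff₂_ofCoeff₂ ..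

theorem one_le_orderTop_hz : ((1 : ℤ) : WithTop ℤ) ≤ hG.hz.orderTop :=
  le_orderTop_iff_forall.mpr fun _ hj => HahnSeries.ext <| funext fun i =>
    hG.hzS_of_nonpos i (Int.lt_add_one_iff.mp (WithTop.coe_lt_coe.mp hj))

theorem orderTop_hz_pos : 0 < hG.hz.orderTop :=
  (WithTop.coe_lt_coe.mpr one_pos).trans_le hG.one_le_orderTop_hz

theorem coeff_hz_pow_of_lt {d : ℕ} {j : ℤ} (hj : j < d) : (hG.hz ^ d).coeff j = 0 := by
  refine coeff_eq_zero_of_lt_orderTop ((WithTop.coe_lt_coe.mpr hj).trans_le ?_)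
  calc ((d : ℤ) : WithTop ℤ) = d • ((1 : ℤ) : WithTop ℤ) := by
        rw [← WithTop.coe_nsmul, nsmul_one]
    _ ≤ d • hG.hz.orderTop := nsmul_le_nsmul_right hG.one_le_orderTop_hz d
    _ ≤ (hG.hz ^ d).orderTop := orderTop_nsmul_le_orderTop_pow

/-- The power `G ^ k`, `k : ℤ`, expanded as `z ^ k (1 + (G - z) / z) ^ k` in `R((z))((w))` by
means of the binomial series. -/
def pow (k : ℤ) : R⸨X⸩⸨X⸩ :=
  C (single k 1) *
    PowerSeries.heval hG.hz ((PowerSeries.binomialSeries ℤ k).map (Int.castRingHom R⸨X⸩))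

theorem coeff₂_pow (k : ℤ) : coeff₂ (hG.pow k) = izwPow G k := by
  funext a b
  rw [pow, coeff₂_C_mul, coeff_single_mul, one_mul, PowerSeries.heval_apply,
    SummableFamily.coeff_hsum, ← coeff.addMonoidHom_apply,
    AddMonoidHom.map_finsum _ (SummableFamily.finite_co_support _ b), izwPow]
  refine finsum_congr fun d => ?_
  rw [SummableFamily.powerSeriesFamily_of_orderTop_pos hG.orderTop_hz_pos, zbinom_eq_choose,
    ← hG.coeff₂_hz, pow2_coeff₂, PowerSeries.coeff_map, PowerSeries.binomialSeries_coeff,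
    smul_eq_mul, mul_one, eq_intCast, ← map_intCast C (Ring.choose k d), coeff.addMonoidHom_apply,
    coeff_smul, smul_eq_mul, C_apply, coeff_single_zero_mul, coeff₂]

theorem pow_add (j k : ℤ) : hG.pow (j + k) = hG.pow j * hG.pow k := by
  have hC : (C (single (j + k) 1) : R⸨X⸩⸨X⸩) = C (single j 1) * C (single k 1) := by
    rw [← map_mul, single_mul_single, mul_one]
  rw [pow, pow, pow, PowerSeries.binomialSeries_add, map_mul, map_mul, hC, mul_mul_mul_comm]

theorem pow_zero : hG.pow 0 = 1 := by
  rw [pow, PowerSeries.binomialSeries_zero, map_one (PowerSeries.map _),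
    map_one (PowerSeries.heval _), mul_one]
  exact map_one C

theorem pow_natCast (k : ℕ) : hG.pow k = hG.pow 1 ^ k := by
  induction k with
  | zero => rw [Nat.cast_zero, hG.pow_zero, _root_.pow_zero]
  | succ k ih => rw [Nat.cast_succ, hG.pow_add, ih, pow_succ]

theorem pow_one_eq : hG.pow 1 = C (single 1 1) * (1 + hG.hz) := by
  have h : PowerSeries.binomialSeries ℤ (1 : ℤ) = 1 + PowerSeries.X := by
    simpa using PowerSeries.binomialSeries_nat (R := ℤ) (A := ℤ) 1
  rw [pow, h, map_add, map_one (PowerSeries.map _), PowerSeries.map_X, map_add,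
    map_one (PowerSeries.heval _),
    PowerSeries.heval_X hG.hz hG.orderTop_hz_pos]

theorem coeff₂_pow_one : coeff₂ (hG.pow 1) = G := by
  funext a b
  rw [pow_one_eq, coeff₂_C_mul, coeff_single_mul, one_mul, coeff_add, coeff_add]
  change coeff₂ 1 (a - 1) b + coeff₂ hG.hz (a - 1) b = G a b
  rw [coeff₂_hz, hzS, oneS2_eq_coeff₂, sub_add_cancel, add_sub_cancel]

theorem pow2_eq_izwPow (k : ℕ) : pow2 G k = izwPow G k := by
  rw [← hG.coeff₂_pow, hG.pow_natCast, ← pow2_coeff₂, coeff₂_pow_one]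

theorem izwPow_eq_zero_of_neg (k a : ℤ) {b : ℤ} (hb : b < 0) : izwPow G k a b = 0 := by
  rw [izwPow, ← hG.coeff₂_hz]
  simp [pow2_coeff₂, coeff₂, hG.coeff_hz_pow_of_lt (hb.trans_le (Int.natCast_nonneg _))]

theorem izwPow_eq_zero_of_lt {k a b : ℤ} (h : a + b < k) : izwPow G k a b = 0 := by
  have hdeg : DegGE 0 hG.hz := fun i j => by simpa only [coeff₂_hz] using hG.hzS_of_add_neg i j
  rw [izwPow, ← hG.coeff₂_hz, ← finsum_zero (α := ℕ)]
  exact finsum_congr fun d => by rw [pow2_coeff₂, hdeg.pow d _ _ (by omega), mul_zero]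

theorem izwPow_zero_right (k a : ℤ) : izwPow G k a 0 = if a = k then 1 else 0 := by
  rw [izwPow, finsum_eq_single _ 0]
  · simp [zbinom_eq_choose, pow2, oneS2, sub_eq_zero]
  · intro d hd
    rw [← hG.coeff₂_hz, pow2_coeff₂, coeff₂,
      hG.coeff_hz_pow_of_lt (Int.natCast_pos.mpr (Nat.pos_of_ne_zero hd)), coeff_zero, mul_zero]

theorem izwPow_one_right (k a : ℤ) : izwPow G k a 1 = k * G (a - k + 1) 1 := by
  rw [izwPow, finsum_eq_single _ 1]
  · rw [← hG.coeff₂_hz, pow2_coeff₂, pow_one, hG.coeff₂_hz, hzS, oneS2, if_neg (by simp),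
      sub_zero, zbinom_eq_choose, Ring.choose_one_right]
  · intro d hd
    rcases Nat.lt_or_gt_of_ne hd with h | h
    · obtain rfl : d = 0 := by omega
      simp [pow2, oneS2]
    · rw [← hG.coeff₂_hz, pow2_coeff₂, coeff₂, hG.coeff_hz_pow_of_lt (by exact_mod_cast h),
        coeff_zero, mul_zero]

theorem finite_support_shift (f : R⸨X⸩) (a b : ℤ) :
    (fun m => f.coeff m * izwPow G m a b).HasFiniteSupport := by
  refine (Set.finite_Icc f.order (a + b)).subset fun m hm => ⟨?_, ?_⟩
  · exact order_le_of_coeff_ne_zero (left_ne_zero_of_mul hm)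
  · exact not_lt.mp fun h => right_ne_zero_of_mul hm (hG.izwPow_eq_zero_of_lt h)

theorem shift_eq_zero_of_lt {f : ℤ → R} {N : ℤ} (hf : ∀ i < N, f i = 0) (a b : ℤ)
    (h : a + b < N) : ∑ᶠ m, f m * izwPow G m a b = 0 := by
  rw [← finsum_zero (α := ℤ)]
  refine finsum_congr fun m => ?_
  rcases lt_or_ge m N with hm | hm
  · rw [hf m hm, zero_mul]
  · rw [hG.izwPow_eq_zero_of_lt (by omega), mul_zero]

/-- The expansion of `f(G(z,w))` in `R((z))((w))`, as an additive map in `f`. -/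
def shiftAdd : R⸨X⸩ →+ R⸨X⸩⸨X⸩ :=
  AddMonoidHom.mk' (fun f => ofCoeff₂ (fun a b => ∑ᶠ m, f.coeff m * izwPow G m a b) f.order
    (fun a b hb => by simp only [hG.izwPow_eq_zero_of_neg _ a hb, mul_zero, finsum_zero])
    (hG.shift_eq_zero_of_lt fun _ => coeff_eq_zero_of_lt_order)) fun f g => by
      refine coeff₂_injective (funext₂ fun a b => ?_)
      change ∑ᶠ m, (f + g).coeff m * izwPow G m a b = _ + _
      simp only [coeff_add, add_mul]
      exact finsum_add_distrib (hG.finite_support_shift f a b) (hG.finite_support_shift g a b)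

theorem coeff₂_shiftAdd (f : R⸨X⸩) (a b : ℤ) :
    coeff₂ (hG.shiftAdd f) a b = ∑ᶠ m, f.coeff m * izwPow G m a b :=
  rfl

theorem degGE_shiftAdd {N : ℤ} {f : R⸨X⸩} (hf : ∀ i < N, f.coeff i = 0) :
    DegGE N (hG.shiftAdd f) :=
  hG.shift_eq_zero_of_lt hf

theorem shiftAdd_single (i : ℤ) (r : R) : hG.shiftAdd (single i r) = C (C r) * hG.pow i := by
  refine coeff₂_injective (funext₂ fun a b => ?_)
  rw [coeff₂_shiftAdd, finsum_eq_single _ i, coeff_single_same, coeff₂_C_mul, C_apply,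
    coeff_single_zero_mul, ← hG.coeff₂_pow, coeff₂]
  intro m hm
  rw [coeff_single_of_ne hm, zero_mul]

theorem shiftAdd_mul (f g : R⸨X⸩) : hG.shiftAdd (f * g) = hG.shiftAdd f * hG.shiftAdd g := by
  refine coeff₂_injective (funext₂ fun a b => ?_)
  let c : R⸨X⸩⸨X⸩ →+ R := (coeff.addMonoidHom a).comp (coeff.addMonoidHom b)
  suffices h : AddMonoidHom.mul.compr₂ (c.comp hG.shiftAdd) =
      ((AddMonoidHom.mul.compl₂ hG.shiftAdd).comp hG.shiftAdd).compr₂ c from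
    DFunLike.congr_fun (DFunLike.congr_fun h f) g
  refine addMonoidHom_ext_single₂ (fun i r j s => ?_) (a + b + 1) fun f g N M hf hg hNM => ?_
  · change c (hG.shiftAdd (single i r * single j s)) =
      c (hG.shiftAdd (single i r) * hG.shiftAdd (single j s))
    rw [single_mul_single, shiftAdd_single, shiftAdd_single, shiftAdd_single, hG.pow_add,
      map_mul C r, map_mul C (C r), mul_mul_mul_comm]
  · change coeff₂ (hG.shiftAdd (f * g)) a b = coeff₂ (hG.shiftAdd f * hG.shiftAdd g) a b
    rw [hG.degGE_shiftAdd (coeff_mul_eq_zero_of_lt hf hg) a b (by omega),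
      (hG.degGE_shiftAdd hf).mul (hG.degGE_shiftAdd hg) a b (by omega)]

/-- The substitution `f(z) ↦ f(G(z,w))`, a ring homomorphism `R((z)) → R((z))((w))`. -/
def shift : R⸨X⸩ →+* R⸨X⸩⸨X⸩ where
  __ := hG.shiftAdd
  map_one' := by
    change hG.shiftAdd (single 0 1) = 1
    rw [shiftAdd_single, hG.pow_zero, mul_one]
    exact (congrArg C (map_one C)).trans (map_one C)
  map_mul' := hG.shiftAdd_mul

theorem coeff₂_shift (f : R⸨X⸩) (a b : ℤ) :
    coeff₂ (hG.shift f) a b = ∑ᶠ m, f.coeff m * izwPow G m a b :=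
  rfl

theorem degGE_shift {N : ℤ} {f : R⸨X⸩} (hf : ∀ i < N, f.coeff i = 0) : DegGE N (hG.shift f) :=
  hG.shift_eq_zero_of_lt hf

theorem coeff_shift_of_neg (f : R⸨X⸩) {b : ℤ} (hb : b < 0) : (hG.shift f).coeff b = 0 := by
  ext a
  change coeff₂ (hG.shift f) a b = 0
  simp only [coeff₂_shift, hG.izwPow_eq_zero_of_neg _ a hb, mul_zero, finsum_zero]

theorem shift_single (i : ℤ) (r : R) : hG.shift (single i r) = C (C r) * hG.pow i :=
  hG.shiftAdd_single i r

theorem shift_C (r : R) : hG.shift (C r) = C (C r) := by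
  rw [C_apply (a := r), shift_single, hG.pow_zero, mul_one, C_apply (a := r)]

theorem coeff₂_shift_single_one : coeff₂ (hG.shift (single 1 1)) = G := by
  rw [shift_single, map_one C, map_one C, one_mul, coeff₂_pow_one]

end IsDeformation

section BaseChange

variable {B : Type*} [CommRing B] {φ : R →+* B}

theorem oneS2_map : oneS2 B = fun i j => φ (oneS2 R i j) := by
  funext i j
  simp only [oneS2, apply_ite φ, map_one, map_zero]

theorem pow2_map (hφ : Function.Injective φ) (G : ℤ → ℤ → R) (k : ℕ) :
    pow2 (fun i j => φ (G i j)) k = fun i j => φ (pow2 G k i j) := by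
  induction k with
  | zero => exact oneS2_map
  | succ k ih =>
    funext i j
    rw [pow2, ih, pow2, mulS2, mulS2]
    refine Eq.trans ?_ (AddMonoidHom.map_finsum_of_injective φ.toAddMonoidHom hφ _).symm
    simp only [smul_eq_mul, RingHom.toAddMonoidHom_eq_coe, AddMonoidHom.coe_coe, map_mul]

theorem izwPow_map (hφ : Function.Injective φ) (G : ℤ → ℤ → R) (k a b : ℤ) :
    izwPow (fun i j => φ (G i j)) k a b = φ (izwPow G k a b) := by
  have hhz : hzS (fun i j => φ (G i j)) = fun i j => φ (hzS G i j) := by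
    funext i j
    rw [hzS, hzS, map_sub, oneS2_map (φ := φ)]
  rw [izwPow, izwPow, hhz]
  refine Eq.trans ?_ (AddMonoidHom.map_finsum_of_injective φ.toAddMonoidHom hφ _).symm
  simp only [pow2_map hφ, RingHom.toAddMonoidHom_eq_coe, AddMonoidHom.coe_coe, map_mul,
    map_intCast]

theorem IsDeformation.map {G : ℤ → ℤ → R} (hG : IsDeformation G) (φ : R →+* B) :
    IsDeformation fun i j => φ (G i j) where
  eq_zero_of_neg i j h := by rw [hG.eq_zero_of_neg i j h, map_zero]
  right_zero i := by rw [hG.right_zero, apply_ite φ, map_one, map_zero]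

end BaseChange

namespace FormalGroupLaw

variable (𝓕 : FormalGroupLaw R)

theorem isDeformation : IsDeformation 𝓕.F :=
  ⟨𝓕.F_supp, 𝓕.F_modw⟩

theorem isDeformation_C : IsDeformation fun i j => (C (𝓕.F i j) : R⸨X⸩) :=
  𝓕.isDeformation.map (C : R →+* R⸨X⸩)

/-- The expansion of `f(F(z,w))` in `R((z))((w))`; its coefficients in `w` are the
`F`-hyperderivatives of `f`. -/
def shift : R⸨X⸩ →+* R⸨X⸩⸨X⸩ :=
  𝓕.isDeformation.shift

theorem coeff_coeff_shift (f : R⸨X⸩) (a : ℤ) (n : ℕ) :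
    ((𝓕.shift f).coeff n).coeff a = 𝓕.hyper n f.coeff a :=
  rfl

theorem coeff_shift (f : R⸨X⸩) (n : ℕ) : ((𝓕.shift f).coeff n).coeff = 𝓕.hyper n f.coeff :=
  rfl

theorem coeff_coeff_shift_single_one (i j : ℤ) :
    ((𝓕.shift (single 1 1)).coeff j).coeff i = 𝓕.F i j :=
  congrFun₂ 𝓕.isDeformation.coeff₂_shift_single_one i j

theorem shift_C (r : R) : 𝓕.shift (C r) = C (C r) :=
  𝓕.isDeformation.shift_C r

/-- The expansion of `f(F(F(z,v),w))` in `R((z))((v))((w))`. -/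
def shiftLeft : R⸨X⸩ →+* R⸨X⸩⸨X⸩⸨X⸩ :=
  (mapCoeff 𝓕.shift).comp 𝓕.shift

/-- The expansion of `f(F(z,F(v,w)))` in `R((z))((v))((w))`: after `f(F(z,v))`, the variable `v`
is shifted to `F(v,w)` over the base ring `R((z))`. -/
def shiftRight : R⸨X⸩ →+* R⸨X⸩⸨X⸩⸨X⸩ :=
  𝓕.isDeformation_C.shift.comp 𝓕.shift

theorem coeff_shiftLeft (f : R⸨X⸩) (m n a : ℤ) :
    (((𝓕.shiftLeft f).coeff n).coeff m).coeff a =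
      ∑ᶠ k, ((𝓕.shift f).coeff n).coeff k * izwPow 𝓕.F k a m :=
  rfl

theorem coeff_shiftRight (f : R⸨X⸩) (m n a : ℤ) :
    (((𝓕.shiftRight f).coeff n).coeff m).coeff a =
      ∑ᶠ k, ((𝓕.shift f).coeff k).coeff a * izwPow 𝓕.F k m n := by
  change (∑ᶠ k, (𝓕.shift f).coeff k * izwPow (fun i j => C (𝓕.F i j)) k m n).coeff a = _
  refine (AddMonoidHom.map_finsum (coeff.addMonoidHom a)
    (𝓕.isDeformation_C.finite_support_shift (𝓕.shift f) m n)).trans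
    (finsum_congr fun k => ?_)
  rw [izwPow_map C_injective, coeff.addMonoidHom_apply, mul_comm, C_apply, coeff_single_zero_mul,
    mul_comm]

theorem shiftLeft_single_one : 𝓕.shiftLeft (single 1 1) = 𝓕.shiftRight (single 1 1) := by
  ext n m a
  rw [coeff_shiftLeft, coeff_shiftRight]
  simp only [coeff_coeff_shift_single_one]
  rw [finsum_int_eq_finsum_nat fun k hk => by rw [𝓕.F_supp k n (.inl hk), zero_mul],
    finsum_int_eq_finsum_nat fun k hk => by rw [𝓕.F_supp a k (.inr hk), zero_mul]]
  simpa only [𝓕.isDeformation.pow2_eq_izwPow] using 𝓕.F_assoc a m n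

theorem shiftLeft_C (r : R) : 𝓕.shiftLeft (C r) = 𝓕.shiftRight (C r) := by
  have hright : 𝓕.isDeformation_C.shift (C (C r)) = C (C (C r)) :=
    𝓕.isDeformation_C.shift_C (C r)
  rw [shiftLeft, shiftRight, RingHom.comp_apply, RingHom.comp_apply, shift_C, mapCoeff_C, shift_C,
    hright]

theorem coeff_shiftLeft_eq_zero_of_lt {f : R⸨X⸩} {N m n a : ℤ} (hf : ∀ i < N, f.coeff i = 0)
    (h : a + m + n < N) : (((𝓕.shiftLeft f).coeff n).coeff m).coeff a = 0 := by
  have hshift : DegGE N (𝓕.shift f) := 𝓕.isDeformation.degGE_shift hf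
  rw [coeff_shiftLeft]
  exact 𝓕.isDeformation.shift_eq_zero_of_lt (N := N - n) (fun k hk => hshift k n (by omega)) a m
    (by omega)

theorem coeff_shiftRight_eq_zero_of_lt {f : R⸨X⸩} {N m n a : ℤ} (hf : ∀ i < N, f.coeff i = 0)
    (h : a + m + n < N) : (((𝓕.shiftRight f).coeff n).coeff m).coeff a = 0 := by
  have hshift : DegGE N (𝓕.shift f) := 𝓕.isDeformation.degGE_shift hf
  rw [coeff_shiftRight]
  exact 𝓕.isDeformation.shift_eq_zero_of_lt (f := fun k => ((𝓕.shift f).coeff k).coeff a)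
    (N := N - a) (fun k hk => hshift a k (by omega)) m n (by omega)

theorem shiftLeft_eq_shiftRight : 𝓕.shiftLeft = 𝓕.shiftRight := by
  ext f n m a
  let c : R⸨X⸩⸨X⸩⸨X⸩ →+ R :=
    (coeff.addMonoidHom a).comp ((coeff.addMonoidHom m).comp (coeff.addMonoidHom n))
  suffices h : c.comp 𝓕.shiftLeft.toAddMonoidHom = c.comp 𝓕.shiftRight.toAddMonoidHom from
    DFunLike.congr_fun h f
  refine addMonoidHom_ext_single (fun i r => ?_) (a + m + n + 1) fun f hf => ?_
  · exact congrArg c <| ringHom_single_eq 𝓕.shiftLeft_C 𝓕.shiftLeft_single_one i r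
  · exact (𝓕.coeff_shiftLeft_eq_zero_of_lt hf (by omega)).trans
      (𝓕.coeff_shiftRight_eq_zero_of_lt hf (by omega)).symm

theorem hyper_hyper {f : ℤ → R} (hf : IsLaurent f) (m n : ℕ) (a : ℤ) :
    𝓕.hyper m (𝓕.hyper n f) a = ∑ᶠ k : ℕ, 𝓕.binomF k m n * 𝓕.hyper k f a := by
  obtain ⟨x, rfl⟩ := exists_laurentSeries hf
  calc 𝓕.hyper m (𝓕.hyper n x.coeff) a
      = (((𝓕.shiftLeft x).coeff n).coeff m).coeff a := rfl
    _ = ∑ᶠ k : ℤ, ((𝓕.shift x).coeff k).coeff a * 𝓕.binomF k m n := by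
        rw [shiftLeft_eq_shiftRight, coeff_shiftRight]; rfl
    _ = ∑ᶠ k : ℕ, ((𝓕.shift x).coeff k).coeff a * 𝓕.binomF k m n :=
        finsum_int_eq_finsum_nat fun k hk => by
          rw [shift, 𝓕.isDeformation.coeff_shift_of_neg x hk, coeff_zero, zero_mul]
    _ = ∑ᶠ k : ℕ, 𝓕.binomF k m n * 𝓕.hyper k x.coeff a := by
        simp only [coeff_coeff_shift, mul_comm]

theorem binomF_eq_zero_of_lt {k m n : ℤ} (h : m + n < k) : 𝓕.binomF k m n = 0 :=
  𝓕.isDeformation.izwPow_eq_zero_of_lt h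

theorem binomF_natCast_comm (k : ℕ) (m n : ℤ) : 𝓕.binomF k m n = 𝓕.binomF k n m := by
  rw [binomF, binomF, ← 𝓕.isDeformation.pow2_eq_izwPow]
  exact pow2_comm 𝓕.F_comm k m n

theorem hyper_comm {f : ℤ → R} (hf : IsLaurent f) (m n : ℕ) :
    𝓕.hyper m (𝓕.hyper n f) = 𝓕.hyper n (𝓕.hyper m f) := by
  funext a
  simp only [𝓕.hyper_hyper hf, 𝓕.binomF_natCast_comm _ m n]

theorem hyper_zero (f : ℤ → R) : 𝓕.hyper 0 f = f := by
  funext a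
  rw [hyper, Nat.cast_zero, finsum_eq_single _ a]
  · rw [𝓕.isDeformation.izwPow_zero_right, if_pos rfl, mul_one]
  · intro m hm
    rw [𝓕.isDeformation.izwPow_zero_right, if_neg hm.symm, mul_zero]

theorem hyper_one (f : ℤ → R) : 𝓕.hyper 1 f = mulS (fun i => 𝓕.F i 1) (fderiv1 f) := by
  funext a
  rw [mulS, ← finsum_comp_equiv (Equiv.subLeft (a + 1)), hyper]
  refine finsum_congr fun m => ?_
  rw [Nat.cast_one, 𝓕.isDeformation.izwPow_one_right, Equiv.subLeft_apply, fderiv1,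
    show a - (a + 1 - m) + 1 = m by ring, show a - m + 1 = a + 1 - m by ring, smul_eq_mul]
  ring

theorem mulS_pF_hyper_one {f : ℤ → R} (hf : IsLaurent f) :
    mulS 𝓕.pF (𝓕.hyper 1 f) = fderiv1 f := by
  obtain ⟨x, hx⟩ : ∃ x : R⸨X⸩, x.coeff = fderiv1 f := exists_laurentSeries (isLaurent_fderiv1 hf)
  obtain ⟨u, hu⟩ : ∃ u : R⸨X⸩, u.coeff = fun i => 𝓕.F i 1 :=
    exists_laurentSeries ⟨0, fun i hi => 𝓕.F_supp i 1 (.inl hi)⟩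
  have hu_one : ((1 : ℤ) : WithTop ℤ) ≤ (1 - u).orderTop := by
    refine le_orderTop_iff_forall.mpr fun i hi => ?_
    have hi_nonpos : i ≤ 0 := Int.lt_add_one_iff.mp (WithTop.coe_lt_coe.mp hi)
    rw [coeff_sub, congrFun hu i, coeff_one]
    rcases hi_nonpos.lt_or_eq with hi | rfl
    · rw [𝓕.F_supp i 1 (.inl hi), if_neg hi.ne, sub_zero]
    · rw [𝓕.F_comm, 𝓕.F_modw, if_pos rfl, if_pos rfl, sub_self]
  obtain ⟨v, hv, hvu⟩ := invOne_coeff_mul ((WithTop.coe_lt_coe.mpr one_pos).trans_le hu_one)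
  rw [hyper_one, pF, ← hu, ← hx, hv, mulS_coeff, mulS_coeff, ← mul_assoc, hvu, one_mul]

theorem hyper_linear {f g : ℤ → R} (hf : IsLaurent f) (hg : IsLaurent g) (lam : R) (n : ℕ) :
    𝓕.hyper n (fun z => lam * f z + g z) =
      fun z => lam * 𝓕.hyper n f z + 𝓕.hyper n g z := by
  obtain ⟨x, rfl⟩ := exists_laurentSeries hf
  obtain ⟨y, rfl⟩ := exists_laurentSeries hg
  have hlin : (fun z => lam * x.coeff z + y.coeff z) = (C lam * x + y).coeff := by
    funext z
    rw [coeff_add, C_apply, coeff_single_zero_mul]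
  funext z
  rw [hlin, ← coeff_coeff_shift, map_add, map_mul, shift_C, C_apply, C_apply, coeff_add,
    coeff_single_zero_mul, coeff_add, coeff_single_zero_mul, coeff_coeff_shift, coeff_coeff_shift]

theorem hyper_mul {f g : ℤ → R} (hf : IsLaurent f) (hg : IsLaurent g) (n : ℕ) (a : ℤ) :
    𝓕.hyper n (mulS f g) a =
      ∑ j ∈ Finset.range (n + 1), mulS (𝓕.hyper j f) (𝓕.hyper (n - j) g) a := by
  obtain ⟨x, rfl⟩ := exists_laurentSeries hf
  obtain ⟨y, rfl⟩ := exists_laurentSeries hg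
  have hneg (z : R⸨X⸩) : ∀ i < 0, (𝓕.shift z).coeff i = 0 := fun _ =>
    𝓕.isDeformation.coeff_shift_of_neg z
  rw [mulS_coeff, ← coeff_coeff_shift, map_mul, coeff_mul_eq_sum_range (hneg x) (hneg y),
    coeff_sum]
  simp only [← coeff_shift, mulS_coeff]

end FormalGroupLaw

end FormalCalculus

/-- basic identities for `F`-hyperderivatives: `𝒮^F_0 f = f`;
`(𝒮^F_1 f)·p_F = f'`; linearity; the Leibniz rule; and the composition rule
`𝒮^F_m 𝒮^F_n = 𝒮^F_n 𝒮^F_m = ∑_k binomF(k;m,n) 𝒮^F_k` (a finite sum, since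
`binomF(k;m,n) = 0` for `k > m + n`). -/
theorem hyper_basic (R : Type*) [CommRing R] (𝓕 : FormalGroupLaw R)
    (f g : ℤ → R) (hf : IsLaurent f) (hg : IsLaurent g) (lam : R) (m n : ℕ) :
    𝓕.hyper 0 f = f ∧
    mulS 𝓕.pF (𝓕.hyper 1 f) = fderiv1 f ∧
    𝓕.hyper n (fun z => lam * f z + g z)
      = (fun z => lam * 𝓕.hyper n f z + 𝓕.hyper n g z) ∧
    𝓕.hyper n (mulS f g)
      = (fun a => ∑ j ∈ Finset.range (n + 1), mulS (𝓕.hyper j f) (𝓕.hyper (n - j) g) a) ∧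
    (∀ k : ℕ, m + n < k → 𝓕.binomF (k : ℤ) (m : ℤ) (n : ℤ) = 0) ∧
    𝓕.hyper m (𝓕.hyper n f) = 𝓕.hyper n (𝓕.hyper m f) ∧
    𝓕.hyper m (𝓕.hyper n f)
      = (fun a => ∑ᶠ k : ℕ, 𝓕.binomF (k : ℤ) (m : ℤ) (n : ℤ) * 𝓕.hyper k f a) := by
  exact ⟨𝓕.hyper_zero f, 𝓕.mulS_pF_hyper_one hf, 𝓕.hyper_linear hf hg lam n,
    funext (𝓕.hyper_mul hf hg n), fun k hk => 𝓕.binomF_eq_zero_of_lt (by exact_mod_cast hk),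
    𝓕.hyper_comm hf m n, funext (𝓕.hyper_hyper hf m n)⟩
end
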